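/- Fix an integer p ≥ 2, θ ∈ S^{p-1}, f ∈ 𝓕, and let κ_n = τ_n p/√n, where the real sequence (τ_n) converges to τ ∈ ℝ. Define the Bingham statistic Q^{(n)} : (S^{p-1})^n → ℝ by Q^{(n)}(x) := (n p(p+2)/2) ( tr[S_n(x)²] − 1/p ), and set d_p := p(p+1)/2 − 1. Then, under P^{(n)}_{θ,κ_n,f}, Q^{(n)} converges in distribution as n → ∞ to the law of ‖G + μ‖², where G is a standard Gaussian random vector on ℝ^{d_p} (mean 0, identity covariance) and μ ∈ ℝ^{d_p} is any fixed vector with ‖μ‖² = 2(p−1)τ²/(p+2); that is, Q^{(n)} converges to the noncentral chi-square distribution with d_p degrees of freedom and noncentrality parameter 2(p−1)τ²/(p+2). -/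

import Mathlib

open MeasureTheory ProbabilityTheory Filter Matrix Real
open scoped ENNReal NNReal Topology

noncomputable section

/-- The normalizing constant `c_p = 1 / ∫_{-1}^1 (1-s²)^{(p-3)/2} ds`. -/
def c0 (p : ℕ) : ℝ := 1 / ∫ s in (-1:ℝ)..1, (1 - s ^ 2) ^ (((p : ℝ) - 3) / 2)

/-- The normalizing constant `c_{p,κ,f} = 1 / ∫_{-1}^1 (1-s²)^{(p-3)/2} f(κ s²) ds`. -/
def cKF (p : ℕ) (κ : ℝ) (f : ℝ → ℝ) : ℝ :=
  1 / ∫ s in (-1:ℝ)..1, (1 - s ^ 2) ^ (((p : ℝ) - 3) / 2) * f (κ * s ^ 2)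

/-- The sample covariance matrix `S_n(x) = (1/n) Σ_i x_i x_i'`. -/
def Sn (p n : ℕ) (x : Fin n → (Fin p → ℝ)) : Matrix (Fin p) (Fin p) ℝ :=
  Matrix.of fun a b => (1 / (n:ℝ)) * ∑ i, x i a * x i b

theorem tendsto_integral_of_tendsto_charFun {E : Type*} [NormedAddCommGroup E]
    [InnerProductSpace ℝ E] [FiniteDimensional ℝ E] [MeasurableSpace E] [BorelSpace E]
    (μ : ℕ → Measure E) [∀ n, IsFiniteMeasure (μ n)] (ν : Measure E) [IsProbabilityMeasure ν]
    (h : ∀ t, Tendsto (fun n => charFun (μ n) t) atTop (𝓝 (charFun ν t)))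
    (g : BoundedContinuousFunction E ℝ) :
    Tendsto (fun n => ∫ x, g x ∂(μ n)) atTop (𝓝 (∫ x, g x ∂ν)) := by
  have hm : Tendsto (fun n => (μ n).real Set.univ) atTop (𝓝 1) := by
    have := h 0
    simp only [charFun_zero, probReal_univ] at this
    simpa [Function.comp_def] using (Complex.continuous_re.tendsto _).comp this
  have hne : ∀ᶠ n in atTop, (μ n).real Set.univ ≠ 0 := hm.eventually_ne one_ne_zero
  let m : ℕ → FiniteMeasure E := fun n => ⟨μ n, inferInstance⟩
  let P : ℕ → ProbabilityMeasure E := fun n => (m n).normalize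
  have hP : ∀ᶠ n in atTop, (P n : Measure E)
      = ENNReal.ofReal ((μ n).real Set.univ)⁻¹ • μ n := by
    filter_upwards [hne] with n hn
    have h0 : m n ≠ 0 := by
      intro h0
      apply hn
      have : μ n = 0 := congrArg Subtype.val h0
      simp [this]
    have hpos : 0 < (μ n).real Set.univ := lt_of_le_of_ne measureReal_nonneg (Ne.symm hn)
    have := FiniteMeasure.toMeasure_normalize_eq_of_nonzero _ h0
    simp only [P, this, m]
    ext s _
    simp only [Measure.smul_apply, FiniteMeasure.mass]
    rw [ENNReal.smul_def, ENNReal.coe_inv, ENNReal.ofReal_inv_of_pos hpos]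
    · simp [measureReal_def]
    · intro h
      exact hn (congrArg NNReal.toReal h)
  have hinteg : ∀ᶠ n in atTop, ∀ (F : Type) [NormedAddCommGroup F] [NormedSpace ℝ F] (φ : E → F),
      ∫ x, φ x ∂(P n : Measure E) = ((μ n).real Set.univ)⁻¹ • ∫ x, φ x ∂(μ n) := by
    filter_upwards [hP] with n hn F _ _ φ
    rw [hn, integral_smul_measure, ENNReal.toReal_ofReal (by positivity)]
  have hlim : Tendsto P atTop (𝓝 (⟨ν, inferInstance⟩ : ProbabilityMeasure E)) := by
    refine ProbabilityMeasure.tendsto_iff_tendsto_charFun.2 fun t => ?_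
    have h1 := (hm.inv₀ one_ne_zero).smul (h t)
    simp only [inv_one, one_smul] at h1
    refine h1.congr' ?_
    filter_upwards [hinteg] with n hn
    simp only [charFun_apply, hn]
  have h2 := (ProbabilityMeasure.tendsto_iff_forall_integral_tendsto.1 hlim) g
  have h3 := hm.mul h2
  simp only [one_mul] at h3
  refine h3.congr' ?_
  filter_upwards [hinteg, hne] with n hn hn0
  rw [hn ℝ, smul_eq_mul, mul_inv_cancel_left₀ hn0]

theorem exists_quadratic_remainder {f : ℝ → ℝ}
    (hf_diff : ∀ᶠ x in 𝓝 (0:ℝ), DifferentiableAt ℝ f x)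
    (hf_diff2 : DifferentiableAt ℝ (deriv f) 0)
    (hf0 : f 0 = 1) (hf'0 : deriv f 0 = 1) :
    ∃ (r : ℝ → ℝ) (a : ℝ), Tendsto r (𝓝 0) (𝓝 a) ∧ ∀ v, f v = 1 + v + r v * v ^ 2 := by
  set a := deriv (deriv f) 0 / 2
  have key : Tendsto (fun v => (f v - 1 - v) / v ^ 2) (𝓝[≠] 0) (𝓝 a) := by
    have hd : ∀ᶠ x in 𝓝[≠] (0:ℝ), DifferentiableAt ℝ f x := nhdsWithin_le_nhds hf_diff
    have hc : Tendsto f (𝓝[≠] 0) (𝓝 1) := by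
      have := hf_diff.self_of_nhds.continuousAt.tendsto
      rw [hf0] at this
      exact this.mono_left nhdsWithin_le_nhds
    have hid : Tendsto (fun v : ℝ => v) (𝓝[≠] 0) (𝓝 0) :=
      tendsto_id.mono_left nhdsWithin_le_nhds
    refine HasDerivAt.lhopital_zero_nhdsNE (f' := fun v => deriv f v - 1)
      (g' := fun v => 2 * v) ?_ ?_ ?_ ?_ ?_ ?_
    · filter_upwards [hd] with v hv
      exact (hv.hasDerivAt.sub_const 1).sub (hasDerivAt_id v)
    · exact Eventually.of_forall fun v => by simpa using hasDerivAt_pow 2 v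
    · filter_upwards [self_mem_nhdsWithin] with v hv
      simpa using hv
    · simpa using (hc.sub_const 1).sub hid
    · simpa using hid.pow 2
    · have h1 := hasDerivAt_iff_tendsto_slope.1 hf_diff2.hasDerivAt
      have h2 := h1.div_const 2
      refine h2.congr fun v => ?_
      simp only [slope_def_field, hf'0, sub_zero]
      rw [div_div, mul_comm]
  refine ⟨fun v => if v = 0 then a else (f v - 1 - v) / v ^ 2, a, ?_, fun v => ?_⟩
  · rw [← nhdsNE_sup_pure, tendsto_sup]
    constructor
    · refine key.congr' ?_
      filter_upwards [self_mem_nhdsWithin] with v hv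
      simp only [Set.mem_compl_iff, Set.mem_singleton_iff] at hv
      simp [hv]
    · rw [tendsto_pure_left]
      intro s hs
      simpa using mem_of_mem_nhds hs
  · by_cases hv : v = 0
    · simp [hv, hf0]
    · simp only [hv, if_false]
      field_simp
      ring

theorem exists_exp_quadratic_remainder :
    ∃ ρ : ℂ → ℂ, Tendsto ρ (𝓝 0) (𝓝 (1 / 2)) ∧ ∀ z, Complex.exp z = 1 + z + ρ z * z ^ 2 := by
  refine ⟨fun z => if z = 0 then 1 / 2 else (Complex.exp z - 1 - z) / z ^ 2, ?_, fun z => ?_⟩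
  · rw [tendsto_iff_norm_sub_tendsto_zero]
    refine squeeze_zero' (Eventually.of_forall fun _ => norm_nonneg _)
      (g := fun z : ℂ => ‖z‖) ?_ (by simpa using (continuous_norm.tendsto (0:ℂ)))
    have : ∀ᶠ z : ℂ in 𝓝 0, ‖z‖ ≤ 1 := by
      filter_upwards [Metric.ball_mem_nhds (0:ℂ) one_pos] with z hz
      simpa using (mem_ball_zero_iff.1 hz).le
    filter_upwards [this] with z hz
    by_cases h : z = 0
    · simp [h]
    · simp only [h, if_false]
      have e : (Complex.exp z - 1 - z) / z ^ 2 - 1 / 2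
          = (Complex.exp z - ∑ m ∈ Finset.range 3, z ^ m / (m.factorial : ℂ)) / z ^ 2 := by
        simp [Finset.sum_range_succ, Nat.factorial]
        field_simp
        ring
      rw [e, norm_div, div_le_iff₀ (norm_pos_iff.2 (pow_ne_zero 2 h))]
      refine (Complex.exp_bound hz (by norm_num)).trans ?_
      rw [norm_pow]
      have := pow_nonneg (norm_nonneg z) 3
      norm_num [Nat.factorial]
      nlinarith
  · by_cases h : z = 0
    · simp [h]
    · simp only [h, if_false]
      field_simp
      ring

theorem tendsto_integral_exp_mul_perturbation {Ω : Type*} [MeasurableSpace Ω] (U : Measure Ω)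
    [IsProbabilityMeasure U] {x w : Ω → ℝ} (hx : Measurable x) (hw : Measurable w) {B : ℝ}
    (hxB : ∀ᵐ y ∂U, |x y| ≤ B) (hw1 : ∀ᵐ y ∂U, |w y| ≤ 1)
    {f : ℝ → ℝ} (hf : Measurable f) {r : ℝ → ℝ} {a : ℝ} (hr : Tendsto r (𝓝 0) (𝓝 a))
    (hfr : ∀ v, f v = 1 + v + r v * v ^ 2)
    {κ : ℕ → ℝ} {c : ℝ} (hκ : Tendsto (fun n : ℕ => √n * κ n) atTop (𝓝 c)) :
    Tendsto (fun n : ℕ => (n : ℂ) * ((∫ y, Complex.exp ((((√n)⁻¹ * x y : ℝ) : ℂ) * Complex.I)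
        * (f (κ n * w y) : ℂ) ∂U) - 1 - (((√n)⁻¹ * ∫ y, x y ∂U : ℝ) : ℂ) * Complex.I
          - ((κ n * ∫ y, w y ∂U : ℝ) : ℂ))) atTop
      (𝓝 (-((∫ y, x y ^ 2 ∂U : ℝ) : ℂ) / 2 + ((c * ∫ y, x y * w y ∂U : ℝ) : ℂ) * Complex.I
        + ((a * c ^ 2 * ∫ y, w y ^ 2 ∂U : ℝ) : ℂ))) := by
  obtain ⟨ρ, hρ, hexp⟩ := exists_exp_quadratic_remainder
  have hε : Tendsto (fun n : ℕ => (√n)⁻¹) atTop (𝓝 0) :=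
    tendsto_inv_atTop_zero.comp (tendsto_sqrt_atTop.comp tendsto_natCast_atTop_atTop)
  have hκ0 : Tendsto κ atTop (𝓝 0) := by
    have h1 := hε.mul hκ
    rw [zero_mul] at h1
    refine h1.congr' ?_
    filter_upwards [eventually_gt_atTop 0] with n hn
    have : (0:ℝ) < √n := Real.sqrt_pos.2 (by exact_mod_cast hn)
    field_simp
  have hf0 : Tendsto f (𝓝 0) (𝓝 1) := by
    have : Tendsto (fun v : ℝ => 1 + v + r v * v ^ 2) (𝓝 0) (𝓝 (1 + 0 + a * 0 ^ 2)) :=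
      (tendsto_id.const_add 1).add (hr.mul (tendsto_id.pow 2))
    simp only [← hfr] at this
    simpa using this
  have hw1' : ∀ᵐ y ∂U, ‖w y‖ ≤ 1 := by simpa using hw1
  have hxB' : ∀ᵐ y ∂U, ‖x y‖ ≤ B := by simpa using hxB
  have ix : Integrable x U := Integrable.of_bound hx.aestronglyMeasurable B hxB'
  have iw : Integrable w U := Integrable.of_bound hw.aestronglyMeasurable 1 hw1'
  have ix2 : Integrable (fun y => x y ^ 2) U := by
    refine Integrable.of_bound (hx.pow_const 2).aestronglyMeasurable (B ^ 2) ?_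
    filter_upwards [hxB'] with y hy
    rw [norm_pow]; gcongr
  have iw2 : Integrable (fun y => w y ^ 2) U := by
    refine Integrable.of_bound (hw.pow_const 2).aestronglyMeasurable (1 ^ 2) ?_
    filter_upwards [hw1'] with y hy
    rw [norm_pow]; gcongr
  have ixw : Integrable (fun y => x y * w y) U := by
    refine Integrable.of_bound (hx.mul hw).aestronglyMeasurable (B * 1) ?_
    filter_upwards [hw1', hxB'] with y hy hy'
    rw [norm_mul]
    have := norm_nonneg (w y)
    gcongr
    exact (norm_nonneg _).trans hy'
  -- pointwise algebraic expansion of the integrand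
  let F : ℕ → Ω → ℂ := fun n y => (n : ℂ) *
    (Complex.exp ((((√n)⁻¹ * x y : ℝ) : ℂ) * Complex.I) * (f (κ n * w y) : ℂ) - 1
      - (((√n)⁻¹ * x y : ℝ) : ℂ) * Complex.I - ((κ n * w y : ℝ) : ℂ))
  let G : Ω → ℂ := fun y => -((x y ^ 2 : ℝ) : ℂ) / 2 + ((c * (x y * w y) : ℝ) : ℂ) * Complex.I
    + ((a * c ^ 2 * w y ^ 2 : ℝ) : ℂ)
  have hF : ∀ n : ℕ, 0 < n → ∀ y, F n y =
      ((√n * κ n : ℝ) : ℂ) * (x y : ℂ) * (w y : ℂ) * Complex.I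
      + (1 + (((√n)⁻¹ * x y : ℝ) : ℂ) * Complex.I) * (r (κ n * w y) : ℂ)
        * ((√n * κ n : ℝ) : ℂ) ^ 2 * (w y : ℂ) ^ 2
      - ρ ((((√n)⁻¹ * x y : ℝ) : ℂ) * Complex.I) * (x y : ℂ) ^ 2 * (f (κ n * w y) : ℂ) := by
    intro n hn y
    have hs : (0:ℝ) < √n := Real.sqrt_pos.2 (by exact_mod_cast hn)
    have hs' : ((√n : ℝ) : ℂ) ≠ 0 := by exact_mod_cast hs.ne'
    have hn2 : (n : ℂ) = ((√n : ℝ) : ℂ) ^ 2 := by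
      rw [← Complex.ofReal_pow, Real.sq_sqrt (Nat.cast_nonneg n)]; simp
    have hfc : (f (κ n * w y) : ℂ) = 1 + (κ n : ℂ) * (w y : ℂ)
        + (r (κ n * w y) : ℂ) * ((κ n : ℂ) * (w y : ℂ)) ^ 2 := by
      rw [hfr (κ n * w y)]; push_cast; ring
    simp only [F]
    rw [hexp, add_mul, hn2]
    generalize ρ ((((√n)⁻¹ * x y : ℝ) : ℂ) * Complex.I) = R
    have h3 : ((√n : ℝ) : ℂ) ^ 2 * (R * (↑((√n)⁻¹ * x y) * Complex.I) ^ 2 * (f (κ n * w y) : ℂ))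
        = - (R * (x y : ℂ) ^ 2 * (f (κ n * w y) : ℂ)) := by
      push_cast
      rw [mul_pow, Complex.I_sq]
      field_simp
    rw [sub_eq_add_neg _ (R * (x y : ℂ) ^ 2 * (f (κ n * w y) : ℂ)), ← h3, hfc]
    push_cast
    field_simp
    ring
  have hlim : Tendsto (fun n => ∫ y, F n y ∂U) atTop (𝓝 (∫ y, G y ∂U)) := by
    have hrb : ∀ᶠ v in 𝓝 (0:ℝ), ‖r v‖ ≤ ‖a‖ + 1 := by
      filter_upwards [hr.norm.eventually (gt_mem_nhds (lt_add_one ‖a‖))] with v hv using hv.le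
    have hρb : ∀ᶠ v in 𝓝 (0:ℂ), ‖ρ v‖ ≤ 1 := by
      have : ‖(1 / 2 : ℂ)‖ < 1 := by norm_num
      filter_upwards [hρ.norm.eventually (gt_mem_nhds this)] with v hv using hv.le
    have hfb : ∀ᶠ v in 𝓝 (0:ℝ), ‖f v‖ ≤ 2 := by
      have : ‖(1 : ℝ)‖ < 2 := by norm_num
      filter_upwards [hf0.norm.eventually (gt_mem_nhds this)] with v hv using hv.le
    obtain ⟨δ, hδ, hb⟩ := Metric.eventually_nhds_iff.1 (hrb.and hfb)
    obtain ⟨δ', hδ', hb'⟩ := Metric.eventually_nhds_iff.1 hρb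
    simp only [dist_zero_right] at hb hb'
    have e1 : ∀ᶠ n : ℕ in atTop, ‖κ n‖ < δ := by
      have := hκ0.norm
      rw [norm_zero] at this
      exact this.eventually (gt_mem_nhds hδ)
    have hεB : Tendsto (fun n : ℕ => (√n)⁻¹ * B) atTop (𝓝 0) := by
      simpa using hε.mul_const B
    have e2 : ∀ᶠ n : ℕ in atTop, (√n)⁻¹ * B < min δ' 1 :=
      hεB.eventually (gt_mem_nhds (lt_min hδ' one_pos))
    have e3 : ∀ᶠ n : ℕ in atTop, ‖√n * κ n‖ ≤ ‖c‖ + 1 := by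
      filter_upwards [hκ.norm.eventually (gt_mem_nhds (lt_add_one ‖c‖))] with v hv using hv.le
    refine tendsto_integral_filter_of_dominated_convergence
      (fun _ => (‖c‖ + 1) * B * 1 * 1 + (1 + 1) * (‖a‖ + 1) * (‖c‖ + 1) ^ 2 * 1 ^ 2
        + 1 * B ^ 2 * 2) ?_ ?_ (integrable_const _) ?_
    · refine Eventually.of_forall fun n => Measurable.aestronglyMeasurable ?_
      simp only [F]
      fun_prop
    · filter_upwards [e1, e2, e3, eventually_gt_atTop 0] with n h1 h2 h3 hn
      filter_upwards [hw1', hxB'] with y hy hy'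
      have hB : 0 ≤ B := (norm_nonneg _).trans hy'
      have hv : ‖κ n * w y‖ < δ := by
        rw [norm_mul]
        calc _ ≤ ‖κ n‖ * 1 := by gcongr
          _ < δ := by simpa using h1
      have hz : ‖(((√n)⁻¹ * x y : ℝ) : ℂ) * Complex.I‖ < min δ' 1 := by
        rw [norm_mul, Complex.norm_I, mul_one, Complex.norm_real, norm_mul]
        refine lt_of_le_of_lt ?_ h2
        rw [Real.norm_of_nonneg (by positivity : (0:ℝ) ≤ (√n)⁻¹)]
        gcongr
      obtain ⟨hrv, hfv⟩ := hb hv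
      have hρv := hb' (hz.trans_le (min_le_left _ _))
      have hz1 : ‖1 + (((√n)⁻¹ * x y : ℝ) : ℂ) * Complex.I‖ ≤ 1 + 1 := by
        refine (norm_add_le _ _).trans ?_
        rw [norm_one]
        have := (hz.trans_le (min_le_right _ _)).le
        gcongr
      rw [hF n hn]
      refine (norm_sub_le _ _).trans (add_le_add ((norm_add_le _ _).trans (add_le_add ?_ ?_)) ?_)
      · simp only [norm_mul, Complex.norm_real, Complex.norm_I] at h3 ⊢
        gcongr
      · rw [norm_mul, norm_mul, norm_mul, norm_pow, norm_pow, Complex.norm_real,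
          Complex.norm_real, Complex.norm_real]
        gcongr
      · rw [norm_mul, norm_mul, norm_pow, Complex.norm_real, Complex.norm_real]
        gcongr
    · refine Eventually.of_forall fun y => ?_
      have hv : Tendsto (fun n => κ n * w y) atTop (𝓝 0) := by simpa using hκ0.mul_const (w y)
      have hz : Tendsto (fun n : ℕ => (((√n)⁻¹ * x y : ℝ) : ℂ) * Complex.I) atTop (𝓝 0) := by
        have h1 : Tendsto (fun n : ℕ => (√n)⁻¹ * x y) atTop (𝓝 0) := by
          simpa using hε.mul_const (x y)
        have := ((Complex.continuous_ofReal.tendsto 0).comp h1).mul_const Complex.I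
        simpa using this
      have cR : ∀ {u : ℕ → ℝ} {l : ℝ}, Tendsto u atTop (𝓝 l) →
          Tendsto (fun n => (u n : ℂ)) atTop (𝓝 (l : ℂ)) :=
        fun h => (Complex.continuous_ofReal.tendsto _).comp h
      have t1 := (((cR hκ).mul_const (x y : ℂ)).mul_const (w y : ℂ)).mul_const Complex.I
      have t2 := (((hz.const_add 1).mul (cR (hr.comp hv))).mul ((cR hκ).pow 2)).mul_const
        ((w y : ℂ) ^ 2)
      have t3 := ((hρ.comp hz).mul_const ((x y : ℂ) ^ 2)).mul (cR (hf0.comp hv))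
      have t := (t1.add t2).sub t3
      have hG : G y = (c : ℂ) * (x y : ℂ) * (w y : ℂ) * Complex.I
          + (1 + 0) * (a : ℂ) * (c : ℂ) ^ 2 * (w y : ℂ) ^ 2
          - 1 / 2 * (x y : ℂ) ^ 2 * ((1 : ℝ) : ℂ) := by
        simp only [G]; push_cast; ring
      rw [hG]
      refine t.congr' ?_
      filter_upwards [eventually_gt_atTop 0] with n hn
      rw [hF n hn]
      rfl
  have hGint : ∫ y, G y ∂U = -((∫ y, x y ^ 2 ∂U : ℝ) : ℂ) / 2
      + ((c * ∫ y, x y * w y ∂U : ℝ) : ℂ) * Complex.I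
      + ((a * c ^ 2 * ∫ y, w y ^ 2 ∂U : ℝ) : ℂ) := by
    simp only [G]
    rw [integral_add, integral_add, integral_mul_const, integral_complex_ofReal,
      integral_complex_ofReal, integral_div, integral_neg, integral_complex_ofReal,
      integral_const_mul, integral_const_mul]
    · exact ix2.ofReal.neg.div_const 2
    · exact (ixw.const_mul c).ofReal.mul_const _
    · exact (ix2.ofReal.neg.div_const 2).add ((ixw.const_mul c).ofReal.mul_const _)
    · exact (iw2.const_mul (a * c ^ 2)).ofReal
  rw [← hGint]
  have hδ : ∃ δ > 0, ∀ v, ‖v‖ < δ → ‖f v‖ ≤ 2 := by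
    have : ‖(1 : ℝ)‖ < 2 := by norm_num
    obtain ⟨δ, hδ, h⟩ := Metric.eventually_nhds_iff.1 (hf0.norm.eventually (gt_mem_nhds this))
    exact ⟨δ, hδ, fun v hv => (h (by simpa using hv)).le⟩
  obtain ⟨δ, hδ, hfb⟩ := hδ
  refine hlim.congr' ?_
  have e1 : ∀ᶠ n : ℕ in atTop, ‖κ n‖ < δ := by
    have := hκ0.norm
    rw [norm_zero] at this
    exact this.eventually (gt_mem_nhds hδ)
  filter_upwards [e1] with n hn
  have ie : Integrable (fun y => Complex.exp ((((√n)⁻¹ * x y : ℝ) : ℂ) * Complex.I)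
      * (f (κ n * w y) : ℂ)) U := by
    refine Integrable.of_bound (Measurable.aestronglyMeasurable (by fun_prop)) 2 ?_
    filter_upwards [hw1'] with y hy
    rw [norm_mul, Complex.norm_exp_ofReal_mul_I, one_mul, Complex.norm_real]
    apply hfb
    rw [norm_mul]
    calc _ ≤ ‖κ n‖ * 1 := by gcongr
      _ < δ := by simpa using hn
  have i1 : Integrable (fun y => (((√n)⁻¹ * x y : ℝ) : ℂ) * Complex.I) U :=
    (ix.const_mul _).ofReal.mul_const _
  have i2 : Integrable (fun y => ((κ n * w y : ℝ) : ℂ)) U := (iw.const_mul _).ofReal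
  simp only [F]
  rw [integral_const_mul, integral_sub, integral_sub, integral_sub ie (integrable_const _),
    integral_mul_const, integral_complex_ofReal, integral_complex_ofReal, integral_const_mul,
    integral_const_mul]
  · simp
  · exact ie.sub (integrable_const _)
  · exact i1
  · exact (ie.sub (integrable_const _)).sub i1
  · exact i2

theorem intervalIntegrable_one_sub_sq_rpow {α : ℝ} (hα : -(1 / 2) ≤ α) :
    IntervalIntegrable (fun s : ℝ => (1 - s ^ 2) ^ α) volume (-1) 1 := by
  have h1 : IntervalIntegrable (fun s : ℝ => 1 / √(1 - s ^ 2)) volume (-1) 1 := by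
    rw [intervalIntegrable_iff_integrableOn_Ioc_of_le (by norm_num)]
    refine intervalIntegral.integrableOn_deriv_of_nonneg (g := Real.arcsin)
      Real.continuous_arcsin.continuousOn (fun s hs => ?_) (fun s _ => by positivity)
    exact Real.hasDerivAt_arcsin hs.1.ne' hs.2.ne
  refine (h1.add (intervalIntegrable_const (c := (1:ℝ)))).mono_fun'
    (Measurable.aestronglyMeasurable (by fun_prop)) ?_
  rw [Set.uIoc_of_le (by norm_num)]
  filter_upwards [ae_restrict_mem measurableSet_Ioc] with s hs
  have h0 : 0 ≤ 1 - s ^ 2 := by nlinarith [hs.1, hs.2]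
  have h2 : 1 - s ^ 2 ≤ 1 := by nlinarith
  rw [Real.norm_of_nonneg (by positivity)]
  rcases h0.eq_or_lt with h | h
  · rw [← h]
    have := Real.zero_rpow_le_one α
    have : (0:ℝ) ≤ 1 / √0 := by positivity
    linarith
  · have : (1 - s ^ 2) ^ α ≤ (1 - s ^ 2) ^ (-(1 / 2) : ℝ) :=
      Real.rpow_le_rpow_of_exponent_ge h h2 hα
    rw [Real.rpow_neg h0, ← Real.sqrt_eq_rpow, ← one_div] at this
    linarith

theorem integral_pow_mul_one_sub_sq_rpow {α : ℝ} (hα : -(1 / 2) ≤ α) (k : ℕ) :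
    ((k:ℝ) + 2 * α + 3) * ∫ s in (-1:ℝ)..1, (1 - s ^ 2) ^ α * s ^ (k + 2)
      = ((k:ℝ) + 1) * ∫ s in (-1:ℝ)..1, (1 - s ^ 2) ^ α * s ^ k := by
  have hinteg : ∀ j : ℕ, IntervalIntegrable (fun s : ℝ => (1 - s ^ 2) ^ α * s ^ j) volume (-1) 1 :=
    fun j => (intervalIntegrable_one_sub_sq_rpow hα).mul_continuousOn (by fun_prop)
  have hftc := intervalIntegral.integral_eq_sub_of_hasDerivAt_of_le (a := -1) (b := 1)
    (f := fun s : ℝ => s ^ (k + 1) * (1 - s ^ 2) ^ (α + 1))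
    (f' := fun s : ℝ => ((k:ℝ) + 1) * ((1 - s ^ 2) ^ α * s ^ k)
      - ((k:ℝ) + 2 * α + 3) * ((1 - s ^ 2) ^ α * s ^ (k + 2))) (by norm_num) ?_ ?_ ?_
  · rw [intervalIntegral.integral_sub ((hinteg k).const_mul _) ((hinteg (k + 2)).const_mul _),
      intervalIntegral.integral_const_mul, intervalIntegral.integral_const_mul] at hftc
    have hz : ((0:ℝ)) ^ (α + 1) = 0 := Real.zero_rpow (by linarith)
    norm_num [hz] at hftc
    linarith
  · refine ContinuousOn.mul (by fun_prop) (ContinuousOn.rpow_const (by fun_prop) ?_)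
    intro s _
    right; linarith
  · intro s hs
    have h0 : 0 < 1 - s ^ 2 := by nlinarith [hs.1, hs.2]
    have h1 : HasDerivAt (fun s : ℝ => 1 - s ^ 2) (-(2 * s)) s := by
      simpa using (hasDerivAt_pow 2 s).const_sub 1
    have h2 := (hasDerivAt_pow (k + 1) s).mul (h1.rpow_const (p := α + 1) (Or.inl h0.ne'))
    refine h2.congr_deriv ?_
    rw [Real.rpow_add_one h0.ne']
    simp only [add_sub_cancel_right, Nat.cast_add, Nat.cast_one, Nat.add_sub_cancel]
    ring
  · exact ((hinteg k).const_mul _).sub ((hinteg (k + 2)).const_mul _)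

theorem integral_one_sub_sq_rpow_pos {α : ℝ} (hα : -(1 / 2) ≤ α) :
    0 < ∫ s in (-1:ℝ)..1, (1 - s ^ 2) ^ α := by
  refine intervalIntegral.intervalIntegral_pos_of_pos_on
    (intervalIntegrable_one_sub_sq_rpow hα) (fun s hs => ?_) (by norm_num)
  have h0 : 0 < 1 - s ^ 2 := by nlinarith [hs.1, hs.2]
  positivity

/-- The law of the inner product with a fixed unit vector under the uniform distribution on the
sphere of `ℝ^p`. -/
def marginalLaw (p : ℕ) : Measure ℝ :=
  (volume.restrict (Set.Ioc (-1) 1)).withDensity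
    (fun s => ENNReal.ofReal (c0 p * (1 - s ^ 2) ^ (((p : ℝ) - 3) / 2)))

theorem neg_half_le_exponent {p : ℕ} (hp : 2 ≤ p) : -(1 / 2) ≤ ((p : ℝ) - 3) / 2 := by
  have : (2:ℝ) ≤ p := by exact_mod_cast hp
  linarith

theorem c0_pos {p : ℕ} (hp : 2 ≤ p) : 0 < c0 p :=
  one_div_pos.2 (integral_one_sub_sq_rpow_pos (neg_half_le_exponent hp))

theorem integral_marginalLaw {p : ℕ} (hp : 2 ≤ p) (φ : ℝ → ℝ) :
    ∫ s, φ s ∂(marginalLaw p)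
      = c0 p * ∫ s in (-1:ℝ)..1, (1 - s ^ 2) ^ (((p : ℝ) - 3) / 2) * φ s := by
  rw [marginalLaw, integral_withDensity_eq_integral_toReal_smul (by fun_prop) (by simp),
    intervalIntegral.integral_of_le (by norm_num), ← integral_const_mul]
  refine setIntegral_congr_fun measurableSet_Ioc fun s hs => ?_
  have h0 : 0 ≤ 1 - s ^ 2 := by nlinarith [hs.1, hs.2]
  have := c0_pos hp
  simp only [smul_eq_mul]
  rw [ENNReal.toReal_ofReal (by positivity), mul_assoc]

theorem isProbabilityMeasure_marginalLaw {p : ℕ} (hp : 2 ≤ p) :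
    IsProbabilityMeasure (marginalLaw p) := by
  constructor
  have hα := neg_half_le_exponent hp
  rw [marginalLaw, withDensity_apply _ MeasurableSet.univ, Measure.restrict_univ,
    ← ofReal_integral_eq_lintegral_ofReal, integral_const_mul,
    ← intervalIntegral.integral_of_le (by norm_num)]
  · rw [c0, one_div_mul_cancel (integral_one_sub_sq_rpow_pos hα).ne', ENNReal.ofReal_one]
  · exact ((intervalIntegrable_iff_integrableOn_Ioc_of_le (by norm_num)).1
      (intervalIntegrable_one_sub_sq_rpow hα)).const_mul _
  · filter_upwards [ae_restrict_mem measurableSet_Ioc] with s hs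
    have h0 : 0 ≤ 1 - s ^ 2 := by nlinarith [hs.1, hs.2]
    have := c0_pos hp
    simp only [Pi.zero_apply]
    positivity

theorem integral_sq_marginalLaw {p : ℕ} (hp : 2 ≤ p) :
    ∫ s, s ^ 2 ∂(marginalLaw p) = 1 / p := by
  have hα := neg_half_le_exponent hp
  have hpos := integral_one_sub_sq_rpow_pos hα
  have hp0 : (0:ℝ) < p := by exact_mod_cast (by omega : 0 < p)
  have h := integral_pow_mul_one_sub_sq_rpow hα 0
  simp only [Nat.cast_zero, pow_zero, mul_one, zero_add] at h
  rw [show 2 * (((p:ℝ) - 3) / 2) + 3 = p by ring, one_mul] at h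
  rw [integral_marginalLaw hp, c0, eq_div_iff hp0.ne', one_div_mul_eq_div, div_mul_eq_mul_div,
    mul_comm, h, div_self hpos.ne']

theorem integral_pow_four_marginalLaw {p : ℕ} (hp : 2 ≤ p) :
    ∫ s, s ^ 4 ∂(marginalLaw p) = 3 / (p * (p + 2)) := by
  have hα := neg_half_le_exponent hp
  have hp0 : (0:ℝ) < p := by exact_mod_cast (by omega : 0 < p)
  have h := integral_pow_mul_one_sub_sq_rpow hα 2
  have h2 := integral_sq_marginalLaw hp
  rw [integral_marginalLaw hp] at h2 ⊢
  rw [show ((2:ℕ):ℝ) + 2 * (((p:ℝ) - 3) / 2) + 3 = p + 2 by push_cast; ring] at h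
  norm_num at h
  have h3 : ((p:ℝ) + 2) * (c0 p * ∫ s in (-1:ℝ)..1, (1 - s ^ 2) ^ (((p:ℝ) - 3) / 2) * s ^ 4)
      = 3 * (1 / p) := by
    rw [← h2, mul_left_comm, h]; ring
  field_simp at h3 ⊢
  linarith

theorem exists_orthogonal_dotProduct_mulVec {p : ℕ} (u v : Fin p → ℝ) (h : u ⬝ᵥ u = v ⬝ᵥ v) :
    ∃ O : Matrix (Fin p) (Fin p) ℝ, O * Oᵀ = 1 ∧ ∀ y, u ⬝ᵥ O *ᵥ y = v ⬝ᵥ y := by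
  by_cases huv : u = v
  · exact ⟨1, by simp, fun y => by simp [huv]⟩
  set w := u - v with hw
  have hww : w ⬝ᵥ w ≠ 0 := by
    rw [Ne, dotProduct_self_eq_zero, hw, sub_eq_zero]; exact huv
  have hwu : 2 * (u ⬝ᵥ w) = w ⬝ᵥ w := by
    simp only [hw, sub_dotProduct, dotProduct_sub]
    rw [dotProduct_comm v u, ← h]; ring
  refine ⟨1 - (2 / (w ⬝ᵥ w)) • vecMulVec w w, ?_, fun y => ?_⟩
  · rw [transpose_sub, transpose_one, transpose_smul, transpose_vecMulVec, sub_mul, mul_sub,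
      mul_sub, one_mul, mul_one, smul_mul_smul_comm, vecMulVec_mul_vecMulVec, vecMulVec_smul,
      smul_smul]
    ext i j
    simp only [Matrix.sub_apply, Matrix.smul_apply, smul_eq_mul, vecMulVec_apply, one_mul]
    field_simp
    ring
  · rw [sub_mulVec, one_mulVec, smul_mulVec, vecMulVec_mulVec, dotProduct_sub, dotProduct_smul]
    have e : v ⬝ᵥ y = u ⬝ᵥ y - w ⬝ᵥ y := by rw [hw, sub_dotProduct]; ring
    rw [e]
    simp only [dotProduct_smul, smul_eq_mul, MulOpposite.smul_eq_mul_unop, MulOpposite.unop_op]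
    have hu : u ⬝ᵥ w ≠ 0 := fun h0 => hww (by rw [← hwu, h0, mul_zero])
    rw [← hwu]
    field_simp

section SphereMoments

variable {p : ℕ} {U : Measure (Fin p → ℝ)}

theorem integrable_of_continuous_of_sphere [IsFiniteMeasure U]
    (hUsphere : U {x : Fin p → ℝ | ∑ a, x a ^ 2 = 1}ᶜ = 0)
    {φ : (Fin p → ℝ) → ℝ} (hφ : Continuous φ) : Integrable φ U := by
  have hcl : IsClosed {x : Fin p → ℝ | ∑ a, x a ^ 2 = 1} :=
    isClosed_eq (by fun_prop) continuous_const
  have hco : IsCompact {x : Fin p → ℝ | ∑ a, x a ^ 2 = 1} := by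
    refine Metric.isCompact_of_isClosed_isBounded hcl
      ((Metric.isBounded_closedBall (x := (0 : Fin p → ℝ)) (r := 1)).subset fun x hx => ?_)
    rw [mem_closedBall_zero_iff, pi_norm_le_iff_of_nonneg zero_le_one]
    intro a
    rw [Real.norm_eq_abs, ← sq_le_one_iff_abs_le_one]
    rw [← (show ∑ a, x a ^ 2 = 1 from hx)]
    exact Finset.single_le_sum (f := fun a => x a ^ 2) (fun _ _ => sq_nonneg _)
      (Finset.mem_univ a)
  have h := hφ.continuousOn.integrableOn_compact hco (μ := U)
  rw [IntegrableOn, Measure.restrict_eq_self_of_ae_mem] at h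
  · exact h
  · exact hUsphere

theorem integral_comp_dotProduct_eq_of_norm_eq
    (hUrot : ∀ O : Matrix (Fin p) (Fin p) ℝ, O * Oᵀ = 1 → Measure.map (fun x => O.mulVec x) U = U)
    {u v : Fin p → ℝ} (h : u ⬝ᵥ u = v ⬝ᵥ v) {φ : ℝ → ℝ} (hφ : Continuous φ) :
    ∫ y, φ (u ⬝ᵥ y) ∂U = ∫ y, φ (v ⬝ᵥ y) ∂U := by
  obtain ⟨O, hO, hOy⟩ := exists_orthogonal_dotProduct_mulVec u v h
  have hm : Measurable (fun y => O *ᵥ y) := Continuous.measurable (by fun_prop)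
  have hc : Continuous (fun y : Fin p → ℝ => φ (u ⬝ᵥ y)) := by
    simp only [dotProduct]; fun_prop
  conv_lhs => rw [← hUrot O hO]
  rw [integral_map hm.aemeasurable hc.aestronglyMeasurable]
  simp only [hOy]

theorem integral_dotProduct_pow_eq [NeZero p]
    (hUrot : ∀ O : Matrix (Fin p) (Fin p) ℝ, O * Oᵀ = 1 → Measure.map (fun x => O.mulVec x) U = U)
    (k : ℕ) (u : Fin p → ℝ) :
    ∫ y, (u ⬝ᵥ y) ^ (2 * k) ∂U = (u ⬝ᵥ u) ^ k * ∫ y, y 0 ^ (2 * k) ∂U := by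
  have hu : 0 ≤ u ⬝ᵥ u := by
    simp only [dotProduct]; exact Finset.sum_nonneg fun i _ => mul_self_nonneg _
  have h := integral_comp_dotProduct_eq_of_norm_eq hUrot (u := u)
    (v := Pi.single 0 (√(u ⬝ᵥ u))) (φ := fun s => s ^ (2 * k)) (by simp [Real.mul_self_sqrt hu])
    (by fun_prop)
  rw [h, ← integral_const_mul]
  refine integral_congr_ae (Eventually.of_forall fun y => ?_)
  simp only [single_dotProduct, mul_pow]
  rw [pow_mul, Real.sq_sqrt hu]

variable [IsProbabilityMeasure U]

theorem integral_dotProduct_sq (hp : 0 < p)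
    (hUsphere : U {x : Fin p → ℝ | ∑ a, x a ^ 2 = 1}ᶜ = 0)
    (hUrot : ∀ O : Matrix (Fin p) (Fin p) ℝ, O * Oᵀ = 1 → Measure.map (fun x => O.mulVec x) U = U)
    (u : Fin p → ℝ) : ∫ y, (u ⬝ᵥ y) ^ 2 ∂U = (u ⬝ᵥ u) / p := by
  have : NeZero p := ⟨hp.ne'⟩
  have hp0 : (p : ℝ) ≠ 0 := by exact_mod_cast hp.ne'
  have h : ∀ u : Fin p → ℝ, ∫ y, (u ⬝ᵥ y) ^ 2 ∂U = (u ⬝ᵥ u) * ∫ y, y 0 ^ 2 ∂U := by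
    intro u; simpa using integral_dotProduct_pow_eq hUrot 1 u
  have hsum : ∫ y : Fin p → ℝ, ∑ a, y a ^ 2 ∂U = 1 := by
    have : ∫ y : Fin p → ℝ, ∑ a, y a ^ 2 ∂U = ∫ y : Fin p → ℝ, (1:ℝ) ∂U := integral_congr_ae hUsphere
    simpa using this
  rw [integral_finsetSum _ fun a _ => integrable_of_continuous_of_sphere hUsphere
    (by fun_prop)] at hsum
  have h1 : ∀ a : Fin p, ∫ y, y a ^ 2 ∂U = ∫ y, y 0 ^ 2 ∂U := by
    intro a
    simpa using h (Pi.single a 1)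
  simp only [h1, Finset.sum_const, Finset.card_univ, Fintype.card_fin, nsmul_eq_mul] at hsum
  rw [h u, eq_div_iff hp0]
  linear_combination (u ⬝ᵥ u) * hsum

theorem integral_dotProduct_mul_dotProduct (hp : 0 < p)
    (hUsphere : U {x : Fin p → ℝ | ∑ a, x a ^ 2 = 1}ᶜ = 0)
    (hUrot : ∀ O : Matrix (Fin p) (Fin p) ℝ, O * Oᵀ = 1 → Measure.map (fun x => O.mulVec x) U = U)
    (u v : Fin p → ℝ) : ∫ y, (u ⬝ᵥ y) * (v ⬝ᵥ y) ∂U = (u ⬝ᵥ v) / p := by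
  have e : ∀ y, (u ⬝ᵥ y) * (v ⬝ᵥ y)
      = (1 / 4) * (((u + v) ⬝ᵥ y) ^ 2 - ((u - v) ⬝ᵥ y) ^ 2) := by
    intro y; rw [add_dotProduct, sub_dotProduct]; ring
  have i : ∀ w : Fin p → ℝ, Integrable (fun y => (w ⬝ᵥ y) ^ 2) U := fun w =>
    integrable_of_continuous_of_sphere hUsphere (by simp only [dotProduct]; fun_prop)
  simp only [e]
  rw [integral_const_mul, integral_sub (i _) (i _), integral_dotProduct_sq hp hUsphere hUrot,
    integral_dotProduct_sq hp hUsphere hUrot]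
  simp only [add_dotProduct, sub_dotProduct, dotProduct_add, dotProduct_sub]
  rw [dotProduct_comm v u]
  ring

theorem integral_dotProduct_sq_mul_sq (hp : 0 < p)
    (hUsphere : U {x : Fin p → ℝ | ∑ a, x a ^ 2 = 1}ᶜ = 0)
    (hUrot : ∀ O : Matrix (Fin p) (Fin p) ℝ, O * Oᵀ = 1 → Measure.map (fun x => O.mulVec x) U = U)
    (u v : Fin p → ℝ) : ∫ y, (u ⬝ᵥ y) ^ 2 * (v ⬝ᵥ y) ^ 2 ∂U
      = ((u ⬝ᵥ u) * (v ⬝ᵥ v) + 2 * (u ⬝ᵥ v) ^ 2) / (p * (p + 2)) := by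
  have : NeZero p := ⟨hp.ne'⟩
  have hp0 : (p : ℝ) ≠ 0 := by exact_mod_cast hp.ne'
  have hp2 : (p : ℝ) + 2 ≠ 0 := by positivity
  set m := ∫ y : Fin p → ℝ, y 0 ^ 4 ∂U with hm
  have h : ∀ u : Fin p → ℝ, ∫ y, (u ⬝ᵥ y) ^ 4 ∂U = (u ⬝ᵥ u) ^ 2 * m := fun u =>
    integral_dotProduct_pow_eq hUrot 2 u
  have i : ∀ w : Fin p → ℝ, Integrable (fun y => (w ⬝ᵥ y) ^ 4) U := fun w =>
    integrable_of_continuous_of_sphere hUsphere (by simp only [dotProduct]; fun_prop)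
  have key : ∀ u v : Fin p → ℝ, ∫ y, (u ⬝ᵥ y) ^ 2 * (v ⬝ᵥ y) ^ 2 ∂U
      = ((u ⬝ᵥ u) * (v ⬝ᵥ v) + 2 * (u ⬝ᵥ v) ^ 2) * (m / 3) := by
    intro u v
    have e : ∀ y, (u ⬝ᵥ y) ^ 2 * (v ⬝ᵥ y) ^ 2
        = (1 / 12) * (((u + v) ⬝ᵥ y) ^ 4 + ((u - v) ⬝ᵥ y) ^ 4
          - 2 * (u ⬝ᵥ y) ^ 4 - 2 * (v ⬝ᵥ y) ^ 4) := by
      intro y; rw [add_dotProduct, sub_dotProduct]; ring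
    simp only [e]
    rw [integral_const_mul, integral_sub, integral_sub, integral_add (i _) (i _),
      integral_const_mul, integral_const_mul, h, h, h, h]
    · simp only [add_dotProduct, sub_dotProduct, dotProduct_add, dotProduct_sub]
      rw [dotProduct_comm v u]
      ring
    · exact (i _).add (i _)
    · exact (i _).const_mul 2
    · exact ((i _).add (i _)).sub ((i _).const_mul 2)
    · exact (i _).const_mul 2
  have hsum : ∫ y : Fin p → ℝ, ∑ a, ∑ b, y a ^ 2 * y b ^ 2 ∂U = 1 := by
    have : ∫ y : Fin p → ℝ, ∑ a, ∑ b, y a ^ 2 * y b ^ 2 ∂U = ∫ y : Fin p → ℝ, (1:ℝ) ∂U := by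
      refine integral_congr_ae ?_
      filter_upwards [show ∀ᵐ y ∂U, ∑ a, y a ^ 2 = 1 from hUsphere] with y hy
      simp only [← Finset.mul_sum, hy, mul_one]
    simpa using this
  have h1 : ∀ a b : Fin p, ∫ y, y a ^ 2 * y b ^ 2 ∂U
      = (1 + 2 * (if a = b then 1 else 0)) * (m / 3) := by
    intro a b
    have := key (Pi.single a 1) (Pi.single b 1)
    simp only [single_dotProduct, one_mul, Pi.single_eq_same] at this
    rw [this]
    by_cases hab : a = b
    · simp [hab]
    · simp [hab]
  rw [integral_finsetSum _ fun a _ => integrable_of_continuous_of_sphere hUsphere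
    (by fun_prop)] at hsum
  have h2 : ∀ a : Fin p, ∫ y : Fin p → ℝ, ∑ b, y a ^ 2 * y b ^ 2 ∂U = (p + 2) * (m / 3) := by
    intro a
    rw [integral_finsetSum _ fun b _ => integrable_of_continuous_of_sphere hUsphere
      (by fun_prop)]
    simp only [h1, ← Finset.sum_mul, Finset.sum_add_distrib, ← Finset.mul_sum]
    simp
  simp only [h2, Finset.sum_const, Finset.card_univ, Fintype.card_fin, nsmul_eq_mul] at hsum
  rw [key u v, eq_div_iff (by positivity)]
  linear_combination ((u ⬝ᵥ u) * (v ⬝ᵥ v) + 2 * (u ⬝ᵥ v) ^ 2) * hsum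

theorem integral_dotProduct_prod_four (hp : 0 < p)
    (hUsphere : U {x : Fin p → ℝ | ∑ a, x a ^ 2 = 1}ᶜ = 0)
    (hUrot : ∀ O : Matrix (Fin p) (Fin p) ℝ, O * Oᵀ = 1 → Measure.map (fun x => O.mulVec x) U = U)
    (a b c d : Fin p → ℝ) :
    ∫ y, (a ⬝ᵥ y) * (b ⬝ᵥ y) * ((c ⬝ᵥ y) * (d ⬝ᵥ y)) ∂U
      = ((a ⬝ᵥ b) * (c ⬝ᵥ d) + (a ⬝ᵥ c) * (b ⬝ᵥ d) + (a ⬝ᵥ d) * (b ⬝ᵥ c)) / (p * (p + 2)) := by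
  have e : ∀ y, (a ⬝ᵥ y) * (b ⬝ᵥ y) * ((c ⬝ᵥ y) * (d ⬝ᵥ y))
      = (1 / 16) * (((a + b) ⬝ᵥ y) ^ 2 * ((c + d) ⬝ᵥ y) ^ 2
        - ((a + b) ⬝ᵥ y) ^ 2 * ((c - d) ⬝ᵥ y) ^ 2
        - ((a - b) ⬝ᵥ y) ^ 2 * ((c + d) ⬝ᵥ y) ^ 2
        + ((a - b) ⬝ᵥ y) ^ 2 * ((c - d) ⬝ᵥ y) ^ 2) := by
    intro y; simp only [add_dotProduct, sub_dotProduct]; ring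
  have i : ∀ u v : Fin p → ℝ, Integrable (fun y => (u ⬝ᵥ y) ^ 2 * (v ⬝ᵥ y) ^ 2) U := fun u v =>
    integrable_of_continuous_of_sphere hUsphere (by simp only [dotProduct]; fun_prop)
  simp only [e]
  rw [integral_const_mul, integral_add _ (i _ _), integral_sub _ (i _ _),
    integral_sub (i _ _) (i _ _)]
  · simp only [integral_dotProduct_sq_mul_sq hp hUsphere hUrot]
    simp only [add_dotProduct, sub_dotProduct, dotProduct_add, dotProduct_sub]
    rw [dotProduct_comm b a, dotProduct_comm d c]
    ring
  · exact (i _ _).sub (i _ _)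
  · exact ((i _ _).sub (i _ _)).sub (i _ _)

/-- The quadratic form `y ↦ ∑ a, ∑ b, A a b * (y a * y b)`. -/
def quadForm (A : Fin p → Fin p → ℝ) (y : Fin p → ℝ) : ℝ := ∑ a, ∑ b, A a b * (y a * y b)

theorem continuous_quadForm (A : Fin p → Fin p → ℝ) : Continuous (quadForm A) := by
  unfold quadForm; fun_prop

theorem integral_quadForm (hp : 0 < p)
    (hUsphere : U {x : Fin p → ℝ | ∑ a, x a ^ 2 = 1}ᶜ = 0)
    (hUrot : ∀ O : Matrix (Fin p) (Fin p) ℝ, O * Oᵀ = 1 → Measure.map (fun x => O.mulVec x) U = U)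
    (A : Fin p → Fin p → ℝ) (htr : ∑ a, A a a = 0) : ∫ y, quadForm A y ∂U = 0 := by
  have h : ∀ a b : Fin p, ∫ y, y a * y b ∂U = (if a = b then 1 else 0) / p := by
    intro a b
    have := integral_dotProduct_mul_dotProduct hp hUsphere hUrot (Pi.single a 1) (Pi.single b 1)
    simpa only [single_dotProduct, one_mul, Pi.single_apply] using this
  unfold quadForm
  rw [integral_finsetSum _ fun a _ => integrable_of_continuous_of_sphere hUsphere (by fun_prop)]
  have h2 : ∀ a, ∫ y, ∑ b, A a b * (y a * y b) ∂U = A a a / p := by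
    intro a
    rw [integral_finsetSum _ fun b _ => integrable_of_continuous_of_sphere hUsphere (by fun_prop)]
    simp only [integral_const_mul, h]
    simp [div_eq_mul_inv]
  simp only [h2, ← Finset.sum_div, htr, zero_div]

theorem integral_quadForm_mul_coord (hp : 0 < p)
    (hUsphere : U {x : Fin p → ℝ | ∑ a, x a ^ 2 = 1}ᶜ = 0)
    (hUrot : ∀ O : Matrix (Fin p) (Fin p) ℝ, O * Oᵀ = 1 → Measure.map (fun x => O.mulVec x) U = U)
    {A : Fin p → Fin p → ℝ} (hsym : ∀ a b, A a b = A b a) (htr : ∑ a, A a a = 0) (c d : Fin p) :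
    ∫ y, quadForm A y * (y c * y d) ∂U = 2 * A c d / (p * (p + 2)) := by
  have h : ∀ a b : Fin p, ∫ y, (y a * y b) * (y c * y d) ∂U
      = ((if a = b then 1 else 0) * (if c = d then 1 else 0)
        + (if a = c then 1 else 0) * (if b = d then 1 else 0)
        + (if a = d then 1 else 0) * (if b = c then 1 else 0)) / (p * (p + 2)) := by
    intro a b
    have := integral_dotProduct_prod_four hp hUsphere hUrot (Pi.single a 1) (Pi.single b 1)
      (Pi.single c 1) (Pi.single d 1)
    simpa only [single_dotProduct, one_mul, Pi.single_apply] using this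
  unfold quadForm
  simp only [Finset.sum_mul]
  rw [integral_finsetSum _ fun a _ => integrable_of_continuous_of_sphere hUsphere (by fun_prop)]
  have h2 : ∀ a, ∫ y, ∑ b, A a b * (y a * y b) * (y c * y d) ∂U
      = (A a a * (if c = d then 1 else 0) + (if a = c then 1 else 0) * A a d
        + (if a = d then 1 else 0) * A a c) / (p * (p + 2)) := by
    intro a
    rw [integral_finsetSum _ fun b _ => integrable_of_continuous_of_sphere hUsphere (by fun_prop)]
    have h3 : ∀ b, ∫ y, A a b * (y a * y b) * (y c * y d) ∂U
        = A a b * (((if a = b then 1 else 0) * (if c = d then 1 else 0)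
          + (if a = c then 1 else 0) * (if b = d then 1 else 0)
          + (if a = d then 1 else 0) * (if b = c then 1 else 0)) / (p * (p + 2))) := by
      intro b
      rw [← h, ← integral_const_mul]
      simp only [mul_assoc]
    simp only [h3, mul_div_assoc', ← Finset.sum_div, mul_add (A a _), Finset.sum_add_distrib]
    simp [mul_comm]
  simp only [h2]
  simp only [← Finset.sum_div, Finset.sum_add_distrib, ← Finset.sum_mul, htr]
  simp [hsym d c, two_mul]

theorem integral_quadForm_mul_quadForm (hp : 0 < p)
    (hUsphere : U {x : Fin p → ℝ | ∑ a, x a ^ 2 = 1}ᶜ = 0)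
    (hUrot : ∀ O : Matrix (Fin p) (Fin p) ℝ, O * Oᵀ = 1 → Measure.map (fun x => O.mulVec x) U = U)
    {A : Fin p → Fin p → ℝ} (hsym : ∀ a b, A a b = A b a) (htr : ∑ a, A a a = 0)
    (B : Fin p → Fin p → ℝ) :
    ∫ y, quadForm A y * quadForm B y ∂U = 2 * (∑ a, ∑ b, A a b * B a b) / (p * (p + 2)) := by
  have hc := continuous_quadForm A
  have e : ∀ y, quadForm A y * quadForm B y
      = ∑ a, ∑ b, B a b * (quadForm A y * (y a * y b)) := by
    intro y
    rw [quadForm.eq_1 B, Finset.mul_sum]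
    refine Finset.sum_congr rfl fun a _ => ?_
    rw [Finset.mul_sum]
    exact Finset.sum_congr rfl fun b _ => by ring
  simp only [e]
  rw [integral_finsetSum _ fun a _ => integrable_of_continuous_of_sphere hUsphere (by fun_prop),
    Finset.mul_sum, Finset.sum_div]
  refine Finset.sum_congr rfl fun a _ => ?_
  rw [integral_finsetSum _ fun b _ => integrable_of_continuous_of_sphere hUsphere (by fun_prop),
    Finset.mul_sum, Finset.sum_div]
  refine Finset.sum_congr rfl fun b _ => ?_
  rw [integral_const_mul, integral_quadForm_mul_coord hp hUsphere hUrot hsym htr]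
  ring

end SphereMoments

/-- An orthonormal basis, for the Frobenius inner product, of the space of symmetric traceless
`p × p` matrices, together with Parseval's identity. -/
theorem exists_orthonormal_symmetric_traceless (p : ℕ) (hp : 0 < p) :
    ∃ e : Fin (p * (p + 1) / 2 - 1) → Fin p → Fin p → ℝ,
      (∀ k a b, e k a b = e k b a) ∧ (∀ k, ∑ a, e k a a = 0) ∧
      (∀ k l, ∑ a, ∑ b, e k a b * e l a b = if k = l then 1 else 0) ∧
      ∀ A : Fin p → Fin p → ℝ, (∀ a b, A a b = A b a) → ∑ a, A a a = 0 →
        ∑ k, (∑ a, ∑ b, e k a b * A a b) ^ 2 = ∑ a, ∑ b, A a b ^ 2 := by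
  let V : Submodule ℝ (EuclideanSpace ℝ (Fin p × Fin p)) :=
    { carrier := {A | (∀ a b, A (a, b) = A (b, a)) ∧ ∑ a, A (a, a) = 0}
      add_mem' := by
        rintro A B ⟨hA, hA'⟩ ⟨hB, hB'⟩
        exact ⟨fun a b => by simp [hA a b, hB a b], by simp [Finset.sum_add_distrib, hA', hB']⟩
      zero_mem' := by simp
      smul_mem' := by
        rintro c A ⟨hA, hA'⟩
        exact ⟨fun a b => by simp [hA a b], by simp [← Finset.mul_sum, hA']⟩ }
  let β := stdOrthonormalBasis ℝ V
  let e : Fin (Module.finrank ℝ V) → Fin p → Fin p → ℝ := fun k a b =>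
    (β k : EuclideanSpace ℝ (Fin p × Fin p)) (a, b)
  have hsym : ∀ k a b, e k a b = e k b a := fun k => (β k).2.1
  have htr : ∀ k, ∑ a, e k a a = 0 := fun k => (β k).2.2
  have hinner : ∀ A B : EuclideanSpace ℝ (Fin p × Fin p), inner ℝ A B
      = ∑ a, ∑ b, A (a, b) * B (a, b) := by
    intro A B
    rw [PiLp.inner_apply, Fintype.sum_prod_type]
    simp [mul_comm]
  have horth : ∀ k l, ∑ a, ∑ b, e k a b * e l a b = if k = l then 1 else 0 := by
    intro k l
    rw [← hinner, ← orthonormal_iff_ite.1 β.orthonormal k l]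
    rfl
  have hpars : ∀ A : Fin p → Fin p → ℝ, (∀ a b, A a b = A b a) → ∑ a, A a a = 0 →
      ∑ k, (∑ a, ∑ b, e k a b * A a b) ^ 2 = ∑ a, ∑ b, A a b ^ 2 := by
    intro A hA hA'
    let v : V := ⟨WithLp.toLp 2 (fun ab : Fin p × Fin p => A ab.1 ab.2), hA, hA'⟩
    have h := β.sum_sq_norm_inner_right v
    have h2 : ‖v‖ ^ 2 = ∑ a, ∑ b, A a b ^ 2 := by
      rw [← real_inner_self_eq_norm_sq, Submodule.coe_inner, hinner]
      simp [v, sq]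
    rw [← h2, ← h]
    refine Finset.sum_congr rfl fun k _ => ?_
    rw [Submodule.coe_inner, hinner, Real.norm_eq_abs, sq_abs]
  have hp0 : (p : ℝ) ≠ 0 := by exact_mod_cast hp.ne'
  have hcol : ∀ a b, ∑ k, e k a b ^ 2
      = (1 + if a = b then 1 else 0) / 2 - (if a = b then 1 else 0) / p := by
    intro a b
    let A : Fin p → Fin p → ℝ := fun c d =>
      ((if c = a then 1 else 0) * (if d = b then 1 else 0)
        + (if c = b then 1 else 0) * (if d = a then 1 else 0)) / 2
        - (if a = b then 1 else 0) / p * (if c = d then 1 else 0)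
    have hA : ∀ c d, A c d = A d c := by
      intro c d
      simp only [A, eq_comm (a := c) (b := d)]
      ring
    have hpair : ∀ B : Fin p → Fin p → ℝ, (∀ c d, B c d = B d c) → ∑ c, B c c = 0 →
        ∑ c, ∑ d, B c d * A c d = B a b := by
      intro B hB hB'
      have : ∀ c d, B c d * A c d
          = (1 / 2) * (if c = a then (if d = b then B c d else 0) else 0)
            + (1 / 2) * (if c = b then (if d = a then B c d else 0) else 0)
            - (if a = b then 1 else 0) / p * (if c = d then B c d else 0) := by
        intro c d
        simp only [A]
        split_ifs <;> ring
      simp only [this, Finset.sum_sub_distrib, Finset.sum_add_distrib, ← Finset.mul_sum]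
      simp only [Finset.sum_ite_eq, Finset.mem_univ, if_true, hB']
      have hs : ∀ a b : Fin p, ∑ c, ∑ d, (if c = a then (if d = b then B c d else 0) else 0)
          = B a b := by
        intro a b
        rw [Finset.sum_eq_single a (fun c _ hc => by simp [hc]) (by simp)]
        simp
      rw [hs, hs, hB b a]
      ring
    have hA' : ∑ c, A c c = 0 := by
      simp only [A, Finset.sum_sub_distrib, ← Finset.sum_div, Finset.sum_add_distrib,
        ← Finset.mul_sum]
      by_cases hab : a = b
      · subst hab; simp; field_simp; ring
      · simp [hab, eq_comm]
    have h := hpars A hA hA'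
    simp only [hpair _ (hsym _) (htr _)] at h
    rw [h]
    rw [show ∑ c, ∑ d, A c d ^ 2 = A a b by simpa only [sq] using hpair A hA hA']
    simp only [A]
    by_cases hab : a = b
    · subst hab; simp
    · simp [hab]
  have hdim : (Module.finrank ℝ V : ℝ) = (p : ℝ) * (p + 1) / 2 - 1 := by
    have h1 : ∑ k, ∑ a, ∑ b, e k a b ^ 2 = (Module.finrank ℝ V : ℝ) := by
      simp only [sq, horth]; simp
    have h2 : ∑ k, ∑ a, ∑ b, e k a b ^ 2 = ∑ a, ∑ b, ∑ k, e k a b ^ 2 := by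
      rw [Finset.sum_comm]
      exact Finset.sum_congr rfl fun a _ => Finset.sum_comm
    rw [← h1, h2]
    simp only [hcol, Finset.sum_sub_distrib, ← Finset.sum_div, Finset.sum_add_distrib]
    simp
    field_simp
  have hd : Module.finrank ℝ V = p * (p + 1) / 2 - 1 := by
    have heven : 2 ∣ p * (p + 1) := (Nat.even_mul_succ_self p).two_dvd
    obtain ⟨m, hm⟩ := heven
    have hm' : ((p : ℝ) * (p + 1)) = 2 * m := by exact_mod_cast hm
    rw [hm', mul_div_cancel_left₀ _ two_ne_zero] at hdim
    have : Module.finrank ℝ V + 1 = m := by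
      have : (Module.finrank ℝ V : ℝ) + 1 = m := by linarith
      exact_mod_cast this
    omega
  rw [← hd]
  exact ⟨e, hsym, htr, horth, hpars⟩

theorem ae_marginalLaw_sq_le_one (p : ℕ) : ∀ᵐ s ∂(marginalLaw p), |s ^ 2| ≤ 1 := by
  have h : ∀ᵐ s ∂(volume.restrict (Set.Ioc (-1:ℝ) 1)), |s ^ 2| ≤ 1 := by
    filter_upwards [ae_restrict_mem measurableSet_Ioc] with s hs
    rw [abs_of_nonneg (sq_nonneg s), sq_le_one_iff_abs_le_one, abs_le]
    exact ⟨hs.1.le, hs.2⟩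
  exact (withDensity_absolutelyContinuous _ _).ae_le h

/-- The mass `∫ f(κ s²)` of the unnormalised density, expanded to second order in `κ`. -/
theorem tendsto_nat_mul_integral_marginalLaw {p : ℕ} (hp : 2 ≤ p) {f : ℝ → ℝ} (hf : Measurable f)
    {r : ℝ → ℝ} {a : ℝ} (hr : Tendsto r (𝓝 0) (𝓝 a)) (hfr : ∀ v, f v = 1 + v + r v * v ^ 2)
    {κ : ℕ → ℝ} {c : ℝ} (hκ : Tendsto (fun n : ℕ => √n * κ n) atTop (𝓝 c)) :
    Tendsto (fun n : ℕ => (n : ℂ) * (((∫ s, f (κ n * s ^ 2) ∂(marginalLaw p) : ℝ) : ℂ) - 1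
        - ((κ n * (1 / p) : ℝ) : ℂ))) atTop
      (𝓝 ((a * c ^ 2 * (3 / (p * (p + 2))) : ℝ) : ℂ)) := by
  have := isProbabilityMeasure_marginalLaw hp
  have h := tendsto_integral_exp_mul_perturbation (marginalLaw p) (x := fun _ => 0)
    (w := fun s => s ^ 2) measurable_const (by fun_prop) (B := 0) (by simp)
    (ae_marginalLaw_sq_le_one p) hf hr hfr hκ
  have e4 : ∀ s : ℝ, (s ^ 2) ^ 2 = s ^ 4 := fun s => by ring
  simp only [mul_zero, Complex.ofReal_zero, zero_mul, Complex.exp_zero, one_mul, integral_zero,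
    sub_zero, integral_sq_marginalLaw hp, e4, integral_pow_four_marginalLaw hp, ne_eq,
    OfNat.ofNat_ne_zero, not_false_eq_true, zero_pow, neg_zero, zero_div, add_zero, zero_add,
    integral_complex_ofReal] at h
  exact h

theorem cKF_div_c0 {p : ℕ} (hp : 2 ≤ p) (κ : ℝ) (f : ℝ → ℝ) :
    cKF p κ f / c0 p = (∫ s, f (κ * s ^ 2) ∂(marginalLaw p))⁻¹ := by
  rw [integral_marginalLaw hp, cKF, mul_inv, one_div, div_eq_mul_inv, mul_comm]

theorem tendsto_nat_mul_div_sub_one {A J b : ℕ → ℂ} {α β : ℂ}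
    (hA : Tendsto (fun n : ℕ => (n : ℂ) * (A n - 1 - b n)) atTop (𝓝 α))
    (hJ : Tendsto (fun n : ℕ => (n : ℂ) * (J n - 1 - b n)) atTop (𝓝 β))
    (hb : Tendsto b atTop (𝓝 0)) :
    Tendsto J atTop (𝓝 1) ∧
      Tendsto (fun n : ℕ => (n : ℂ) * (A n / J n - 1)) atTop (𝓝 (α - β)) := by
  have hinv : Tendsto (fun n : ℕ => ((n : ℂ))⁻¹) atTop (𝓝 0) := by
    have := (tendsto_inv_atTop_nhds_zero_nat (𝕜 := ℂ))
    exact this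
  have hJ1 : Tendsto J atTop (𝓝 1) := by
    have h := ((hinv.mul hJ).add hb).add_const 1
    rw [zero_mul, zero_add, zero_add] at h
    refine h.congr' ?_
    filter_upwards [eventually_ne_atTop 0] with n hn
    have : (n : ℂ) ≠ 0 := by exact_mod_cast hn
    field_simp
    ring
  refine ⟨hJ1, ?_⟩
  have h := (hA.sub hJ).div hJ1 one_ne_zero
  rw [div_one] at h
  refine h.congr' ?_
  filter_upwards [hJ1.eventually_ne one_ne_zero] with n hn
  simp only [Pi.div_apply]
  field_simp
  ring

theorem dotProduct_sq_le_one {p : ℕ} {θ y : Fin p → ℝ} (hθ : ∑ a, θ a ^ 2 = 1)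
    (hy : ∑ a, y a ^ 2 = 1) : |(∑ a, y a * θ a) ^ 2| ≤ 1 := by
  rw [abs_of_nonneg (sq_nonneg _)]
  have h := Finset.sum_mul_sq_le_sq_mul_sq Finset.univ y θ
  rwa [hθ, hy, one_mul] at h

theorem abs_quadForm_le {p : ℕ} (A : Fin p → Fin p → ℝ) {y : Fin p → ℝ}
    (hy : ∑ a, y a ^ 2 = 1) : |quadForm A y| ≤ ∑ a, ∑ b, |A a b| := by
  have h1 : ∀ a, |y a| ≤ 1 := fun a => by
    rw [← sq_le_one_iff_abs_le_one, ← hy]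
    exact Finset.single_le_sum (f := fun a => y a ^ 2) (fun _ _ => sq_nonneg _)
      (Finset.mem_univ a)
  refine (Finset.abs_sum_le_sum_abs _ _).trans (Finset.sum_le_sum fun a _ => ?_)
  refine (Finset.abs_sum_le_sum_abs _ _).trans (Finset.sum_le_sum fun b _ => ?_)
  rw [abs_mul, abs_mul]
  exact mul_le_of_le_one_right (abs_nonneg _)
    (mul_le_one₀ (h1 a) (abs_nonneg _) (h1 b))

theorem quadForm_mul_self {p : ℕ} (θ y : Fin p → ℝ) :
    quadForm (fun a b => θ a * θ b) y = (∑ a, y a * θ a) ^ 2 := by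
  rw [quadForm, sq, Finset.sum_mul_sum]
  exact Finset.sum_congr rfl fun a _ => Finset.sum_congr rfl fun b _ => by ring

theorem tendsto_nat_mul_integral_exp_quadForm {p : ℕ} (hp : 2 ≤ p)
    {U : Measure (Fin p → ℝ)} [IsProbabilityMeasure U]
    (hUsphere : U {x : Fin p → ℝ | ∑ a, x a ^ 2 = 1}ᶜ = 0)
    (hUrot : ∀ O : Matrix (Fin p) (Fin p) ℝ, O * Oᵀ = 1 →
      Measure.map (fun x => O.mulVec x) U = U)
    {θ : Fin p → ℝ} (hθ : ∑ a, θ a ^ 2 = 1) {f : ℝ → ℝ} (hf : Measurable f)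
    {r : ℝ → ℝ} {a : ℝ} (hr : Tendsto r (𝓝 0) (𝓝 a)) (hfr : ∀ v, f v = 1 + v + r v * v ^ 2)
    {κ : ℕ → ℝ} {c : ℝ} (hκ : Tendsto (fun n : ℕ => √n * κ n) atTop (𝓝 c))
    {A : Fin p → Fin p → ℝ} (hsym : ∀ a b, A a b = A b a) (htr : ∑ a, A a a = 0) :
    Tendsto (fun n : ℕ => (n : ℂ) *
        ((∫ y, Complex.exp ((((√n)⁻¹ * quadForm A y : ℝ) : ℂ) * Complex.I)
            * (f (κ n * (∑ a, y a * θ a) ^ 2) : ℂ) ∂U)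
          / ((∫ s, f (κ n * s ^ 2) ∂(marginalLaw p) : ℝ) : ℂ) - 1)) atTop
      (𝓝 (-((2 * (∑ a, ∑ b, A a b ^ 2) / (p * (p + 2)) : ℝ) : ℂ) / 2
        + ((c * (2 * (∑ a, ∑ b, A a b * (θ a * θ b)) / (p * (p + 2))) : ℝ) : ℂ)
          * Complex.I)) := by
  have hp0 : 0 < p := by omega
  have hθ' : θ ⬝ᵥ θ = 1 := by rw [← hθ]; exact Finset.sum_congr rfl fun a _ => by ring
  have hw : ∀ y : Fin p → ℝ, (∑ a, y a * θ a) ^ 2 = (θ ⬝ᵥ y) ^ 2 := fun y => by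
    rw [dotProduct_comm]; rfl
  have hw1 : ∀ᵐ y ∂U, |(∑ a, y a * θ a) ^ 2| ≤ 1 := by
    filter_upwards [(show ∀ᵐ y ∂U, ∑ a, y a ^ 2 = 1 from hUsphere)] with y hy
    exact dotProduct_sq_le_one hθ hy
  have hX : ∀ᵐ y ∂U, |quadForm A y| ≤ ∑ a, ∑ b, |A a b| := by
    filter_upwards [(show ∀ᵐ y ∂U, ∑ a, y a ^ 2 = 1 from hUsphere)] with y hy
    exact abs_quadForm_le A hy
  have i1 : ∫ y, (∑ a, y a * θ a) ^ 2 ∂U = 1 / p := by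
    simp_rw [hw]
    rw [integral_dotProduct_sq hp0 hUsphere hUrot, hθ']
  have i2 : ∫ y, ((∑ a, y a * θ a) ^ 2) ^ 2 ∂U = 3 / (p * (p + 2)) := by
    simp_rw [hw]
    have := integral_dotProduct_sq_mul_sq hp0 hUsphere hUrot θ θ
    simp_rw [← sq] at this
    rw [this, hθ']; norm_num
  have i3 : ∫ y, quadForm A y ^ 2 ∂U = 2 * (∑ a, ∑ b, A a b ^ 2) / (p * (p + 2)) := by
    have := integral_quadForm_mul_quadForm hp0 hUsphere hUrot hsym htr A
    simpa only [← sq] using this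
  have i4 : ∫ y, quadForm A y * (∑ a, y a * θ a) ^ 2 ∂U
      = 2 * (∑ a, ∑ b, A a b * (θ a * θ b)) / (p * (p + 2)) := by
    have := integral_quadForm_mul_quadForm hp0 hUsphere hUrot hsym htr (fun a b => θ a * θ b)
    simpa only [quadForm_mul_self] using this
  have h := tendsto_integral_exp_mul_perturbation U (continuous_quadForm A).measurable
    (w := fun y => (∑ a, y a * θ a) ^ 2) (by fun_prop) hX hw1 hf hr hfr hκ
  simp only [i1, i2, i3, i4, integral_quadForm hp0 hUsphere hUrot A htr, mul_zero,
    Complex.ofReal_zero, zero_mul, sub_zero] at h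
  have hκ0 : Tendsto (fun n : ℕ => ((κ n * (1 / p) : ℝ) : ℂ)) atTop (𝓝 0) := by
    have h1 : Tendsto (fun n : ℕ => (√n)⁻¹) atTop (𝓝 0) :=
      (tendsto_sqrt_atTop.comp tendsto_natCast_atTop_atTop).inv_tendsto_atTop
    have h2 : Tendsto (fun n : ℕ => κ n * (1 / p)) atTop (𝓝 0) := by
      have := (h1.mul hκ).mul_const (1 / (p : ℝ))
      rw [zero_mul, zero_mul] at this
      refine this.congr' ?_
      filter_upwards [eventually_gt_atTop 0] with n hn
      have : √(n : ℝ) ≠ 0 := by positivity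
      rw [inv_mul_cancel_left₀ this]
    exact (Complex.continuous_ofReal.tendsto' 0 0 Complex.ofReal_zero).comp h2
  have h3 := (tendsto_nat_mul_div_sub_one h
    (tendsto_nat_mul_integral_marginalLaw hp hf hr hfr hκ) hκ0).2
  rwa [add_sub_cancel_right] at h3

section AxialMeasure

variable {p : ℕ} {U : Measure (Fin p → ℝ)} {θ : Fin p → ℝ} {f : ℝ → ℝ}

/-- The law `P_{θ,κ,f}`, given by its density with respect to the uniform law `U`. -/
abbrev axialMeasure (U : Measure (Fin p → ℝ)) (θ : Fin p → ℝ) (f : ℝ → ℝ) (κ : ℝ) :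
    Measure (Fin p → ℝ) :=
  U.withDensity (fun y => ENNReal.ofReal ((cKF p κ f / c0 p) * f (κ * (∑ a, y a * θ a) ^ 2)))

theorem cKF_div_c0_nonneg (hp : 2 ≤ p) (hf_pos : ∀ x, 0 < f x) (κ : ℝ) :
    0 ≤ cKF p κ f / c0 p := by
  rw [cKF_div_c0 hp]
  exact inv_nonneg.2 (integral_nonneg fun s => (hf_pos _).le)

theorem isFiniteMeasure_axialMeasure [IsFiniteMeasure U] (hp : 2 ≤ p)
    (hUsphere : U {x : Fin p → ℝ | ∑ a, x a ^ 2 = 1}ᶜ = 0) (hθ : ∑ a, θ a ^ 2 = 1)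
    (hf_pos : ∀ x, 0 < f x) (hf_mono : Monotone f) (κ : ℝ) :
    IsFiniteMeasure (axialMeasure U θ f κ) := by
  refine isFiniteMeasure_withDensity (ne_of_lt ?_)
  calc ∫⁻ y, ENNReal.ofReal ((cKF p κ f / c0 p) * f (κ * (∑ a, y a * θ a) ^ 2)) ∂U
      ≤ ∫⁻ _, ENNReal.ofReal ((cKF p κ f / c0 p) * f |κ|) ∂U := by
        refine lintegral_mono_ae ?_
        filter_upwards [(show ∀ᵐ y ∂U, ∑ a, y a ^ 2 = 1 from hUsphere)] with y hy
        refine ENNReal.ofReal_le_ofReal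
          (mul_le_mul_of_nonneg_left (hf_mono ?_) (cKF_div_c0_nonneg hp hf_pos κ))
        refine (le_abs_self _).trans ?_
        rw [abs_mul]
        exact mul_le_of_le_one_right (abs_nonneg _) (dotProduct_sq_le_one hθ hy)
    _ < ⊤ := by
        rw [lintegral_const]
        exact ENNReal.mul_lt_top ENNReal.ofReal_lt_top (measure_lt_top U _)

theorem integral_axialMeasure (hp : 2 ≤ p) (hf_pos : ∀ x, 0 < f x) (hf : Measurable f)
    (κ : ℝ) (φ : (Fin p → ℝ) → ℂ) :
    ∫ y, φ y ∂(axialMeasure U θ f κ)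
      = (∫ y, φ y * (f (κ * (∑ a, y a * θ a) ^ 2) : ℂ) ∂U)
        / ((∫ s, f (κ * s ^ 2) ∂(marginalLaw p) : ℝ) : ℂ) := by
  rw [axialMeasure, integral_withDensity_eq_integral_toReal_smul (by fun_prop) (by simp),
    div_eq_mul_inv (∫ y, φ y * _ ∂U), ← integral_mul_const]
  refine integral_congr_ae (ae_of_all _ fun y => ?_)
  dsimp only
  rw [ENNReal.toReal_ofReal (mul_nonneg (cKF_div_c0_nonneg hp hf_pos κ) (hf_pos _).le),
    cKF_div_c0 hp, Complex.real_smul]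
  push_cast
  ring

theorem quadForm_sum_smul {ι : Type*} [Fintype ι] (t : ι → ℝ) (e : ι → Fin p → Fin p → ℝ)
    (y : Fin p → ℝ) :
    quadForm (fun a b => ∑ k, t k * e k a b) y = ∑ k, t k * quadForm (e k) y := by
  simp only [quadForm, Finset.mul_sum, Finset.sum_mul]
  rw [Finset.sum_comm_cycle]
  refine Finset.sum_congr rfl fun k _ => ?_
  exact Finset.sum_congr rfl fun a _ => Finset.sum_congr rfl fun b _ => by ring

/-- The normalised coordinates, in the system `e`, of the empirical second moment matrix. -/
def scores {ι : Type*} (e : ι → Fin p → Fin p → ℝ) (n : ℕ)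
    (x : Fin n → Fin p → ℝ) : EuclideanSpace ℝ ι :=
  WithLp.toLp 2 fun k => (√n)⁻¹ * ∑ i, √(p * (p + 2) / 2) * quadForm (e k) (x i)

theorem continuous_scores {ι : Type*} [Fintype ι] (e : ι → Fin p → Fin p → ℝ) (n : ℕ) :
    Continuous (scores e n) := by
  unfold scores
  refine (PiLp.continuous_toLp 2 _).comp (continuous_pi fun k => ?_)
  refine continuous_const.mul (continuous_finsetSum _ fun i _ => ?_)
  exact continuous_const.mul ((continuous_quadForm _).comp (continuous_apply i))

theorem charFun_map_scores {ι : Type*} [Fintype ι] (e : ι → Fin p → Fin p → ℝ)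
    (ν : Measure (Fin p → ℝ)) [SigmaFinite ν] (n : ℕ) (t : EuclideanSpace ℝ ι) :
    charFun ((Measure.pi fun _ : Fin n => ν).map (scores e n)) t
      = (∫ y, Complex.exp ((((√n)⁻¹ * quadForm
          (fun a b => ∑ k, (√(p * (p + 2) / 2) * t k) * e k a b) y : ℝ) : ℂ) * Complex.I) ∂ν) ^ n := by
  rw [charFun_apply, integral_map (continuous_scores e n).measurable.aemeasurable (by fun_prop)]
  have h := integral_fintype_prod_eq_pow (ι := Fin n) (μ := ν) (fun y => Complex.exp
    ((((√n)⁻¹ * quadForm (fun a b => ∑ k, (√(p * (p + 2) / 2) * t k) * e k a b) y : ℝ) : ℂ)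
      * Complex.I))
  rw [Fintype.card_fin] at h
  rw [← h]
  refine integral_congr_ae (ae_of_all _ fun x => ?_)
  dsimp only
  rw [← Complex.exp_sum, ← Finset.sum_mul, ← Complex.ofReal_sum]
  congr 3
  simp only [PiLp.inner_apply, scores, quadForm_sum_smul, Finset.mul_sum]
  rw [Finset.sum_comm]
  refine Finset.sum_congr rfl fun i _ => ?_
  simp only [RCLike.inner_apply, conj_trivial, Finset.mul_sum]
  refine Finset.sum_congr rfl fun k _ => ?_
  ring

end AxialMeasure

theorem integral_stdGaussian_add_norm_sq {ι : Type*} [Fintype ι] {m μ : EuclideanSpace ℝ ι}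
    (h : ‖m‖ = ‖μ‖) (g : BoundedContinuousFunction ℝ ℝ) :
    ∫ z, g (‖z‖ ^ 2) ∂((stdGaussian (EuclideanSpace ℝ ι)).map (· + m))
      = ∫ z, g (∑ i, (z i + μ i) ^ 2) ∂(Measure.pi fun _ : ι => gaussianReal 0 1) := by
  have hR := Submodule.reflection_sub h
  set R := (ℝ ∙ (m - μ))ᗮ.reflection
  rw [integral_map (by fun_prop) (by fun_prop)]
  calc ∫ z, g (‖z + m‖ ^ 2) ∂(stdGaussian (EuclideanSpace ℝ ι))
      = ∫ z, g (‖R z + μ‖ ^ 2) ∂(stdGaussian (EuclideanSpace ℝ ι)) := by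
        refine integral_congr_ae (ae_of_all _ fun z => ?_)
        dsimp only
        rw [← hR, ← map_add, LinearIsometryEquiv.norm_map]
    _ = ∫ z, g (‖z + μ‖ ^ 2) ∂(stdGaussian (EuclideanSpace ℝ ι)) := by
        conv_rhs => rw [← stdGaussian_map R]
        rw [integral_map (by fun_prop) (by fun_prop)]
    _ = _ := by
        rw [← map_pi_eq_stdGaussian, integral_map (by fun_prop) (by fun_prop)]
        simp [EuclideanSpace.norm_sq_eq]

section Parseval

variable {p : ℕ} {ι : Type*} [Fintype ι] {e : ι → Fin p → Fin p → ℝ}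

theorem sum_sq_sum_mul_of_trace_one (hp : 0 < p) (htr : ∀ k, ∑ a, e k a a = 0)
    (hpars : ∀ A : Fin p → Fin p → ℝ, (∀ a b, A a b = A b a) → ∑ a, A a a = 0 →
      ∑ k, (∑ a, ∑ b, e k a b * A a b) ^ 2 = ∑ a, ∑ b, A a b ^ 2)
    {A : Fin p → Fin p → ℝ} (hA : ∀ a b, A a b = A b a) (hA1 : ∑ a, A a a = 1) :
    ∑ k, (∑ a, ∑ b, e k a b * A a b) ^ 2 = (∑ a, ∑ b, A a b ^ 2) - 1 / p := by
  have hp' : (p : ℝ) ≠ 0 := by positivity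
  have h := hpars (fun a b => A a b - if a = b then 1 / (p : ℝ) else 0)
    (fun a b => by rw [hA a b]; simp only [eq_comm])
    (by simp [Finset.sum_sub_distrib, hA1, hp'])
  have e1 : ∀ k, ∑ a, ∑ b, e k a b * (A a b - if a = b then 1 / (p : ℝ) else 0)
      = ∑ a, ∑ b, e k a b * A a b := fun k => by
    simp only [mul_sub, Finset.sum_sub_distrib, mul_ite, mul_zero, Finset.sum_ite_eq,
      Finset.mem_univ, if_true]
    rw [← Finset.sum_mul, htr, zero_mul, sub_zero]
  have e2 : ∀ a b, (A a b - if a = b then 1 / (p : ℝ) else 0) ^ 2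
      = A a b ^ 2 - if a = b then 2 / p * A a b - 1 / (p : ℝ) ^ 2 else 0 := fun a b => by
    split_ifs <;> ring
  simp only [e1, e2] at h
  rw [h]
  simp only [Finset.sum_sub_distrib, Finset.sum_ite_eq, Finset.mem_univ, if_true,
    ← Finset.mul_sum, hA1, Finset.sum_const, Finset.card_univ, Fintype.card_fin, nsmul_eq_mul]
  field_simp
  ring

theorem sum_sq_sum_smul_of_orthonormal [DecidableEq ι]
    (horth : ∀ k l, ∑ a, ∑ b, e k a b * e l a b = if k = l then 1 else 0) (s : ι → ℝ) :
    ∑ a, ∑ b, (∑ k, s k * e k a b) ^ 2 = ∑ k, s k ^ 2 := by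
  have h : ∀ k l, ∑ a, ∑ b, (s k * e k a b) * (s l * e l a b)
      = s k * s l * if k = l then 1 else 0 := fun k l => by
    rw [← horth, Finset.mul_sum]
    refine Finset.sum_congr rfl fun a _ => ?_
    rw [Finset.mul_sum]
    exact Finset.sum_congr rfl fun b _ => by ring
  calc ∑ a, ∑ b, (∑ k, s k * e k a b) ^ 2
      = ∑ a, ∑ b, ∑ k, ∑ l, (s k * e k a b) * (s l * e l a b) := by
        simp only [sq, Finset.sum_mul_sum]
    _ = ∑ k, ∑ l, ∑ a, ∑ b, (s k * e k a b) * (s l * e l a b) := by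
        rw [Finset.sum_comm_cycle]
        refine Finset.sum_congr rfl fun k _ => ?_
        rw [Finset.sum_comm_cycle]
    _ = ∑ k, s k ^ 2 := by
        simp [h, sq]

theorem norm_sq_scores_eq (hp : 0 < p) (htr : ∀ k, ∑ a, e k a a = 0)
    (hpars : ∀ A : Fin p → Fin p → ℝ, (∀ a b, A a b = A b a) → ∑ a, A a a = 0 →
      ∑ k, (∑ a, ∑ b, e k a b * A a b) ^ 2 = ∑ a, ∑ b, A a b ^ 2)
    {n : ℕ} (hn : 0 < n) {x : Fin n → Fin p → ℝ} (hx : ∀ i, ∑ a, x i a ^ 2 = 1) :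
    ((n : ℝ) * p * ((p : ℝ) + 2) / 2) * (Matrix.trace (Sn p n x * Sn p n x) - 1 / (p : ℝ))
      = ‖scores e n x‖ ^ 2 := by
  have hn' : (n : ℝ) ≠ 0 := by positivity
  have hS : ∀ a b, Sn p n x a b = Sn p n x b a := fun a b => by
    simp only [Sn, Matrix.of_apply, mul_comm]
  have hS1 : ∑ a, Sn p n x a a = 1 := by
    simp only [Sn, Matrix.of_apply, ← Finset.mul_sum, ← sq]
    rw [Finset.sum_comm]
    simp [hx, hn']
  have htrace : Matrix.trace (Sn p n x * Sn p n x) = ∑ a, ∑ b, Sn p n x a b ^ 2 := by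
    simp only [Matrix.trace, Matrix.diag, Matrix.mul_apply]
    exact Finset.sum_congr rfl fun a _ => Finset.sum_congr rfl fun b _ => by
      rw [hS b a, sq]
  rw [htrace, ← sum_sq_sum_mul_of_trace_one hp htr hpars hS hS1, EuclideanSpace.norm_sq_eq,
    Finset.mul_sum]
  refine Finset.sum_congr rfl fun k _ => ?_
  have e1 : ∑ a, ∑ b, e k a b * Sn p n x a b = (n : ℝ)⁻¹ * ∑ i, quadForm (e k) (x i) := by
    simp only [Sn, Matrix.of_apply, quadForm, Finset.mul_sum]
    rw [Finset.sum_comm_cycle]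
    refine Finset.sum_congr rfl fun i _ => ?_
    exact Finset.sum_congr rfl fun a _ => Finset.sum_congr rfl fun b _ => by ring
  rw [e1, scores, Real.norm_eq_abs, sq_abs]
  dsimp only
  rw [← Finset.mul_sum, mul_pow, mul_pow, mul_pow, inv_pow, inv_pow, Real.sq_sqrt (by positivity),
    Real.sq_sqrt (by positivity)]
  field_simp

end Parseval

/-- The noncentrality vector of the limit law, in the coordinates given by `e`. -/
def shift {p : ℕ} {ι : Type*} (e : ι → Fin p → Fin p → ℝ) (θ : Fin p → ℝ) (c : ℝ) :
    EuclideanSpace ℝ ι :=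
  WithLp.toLp 2 fun k =>
    c * √(p * (p + 2) / 2) * (2 / (p * (p + 2))) * ∑ a, ∑ b, e k a b * (θ a * θ b)

theorem norm_sq_shift {p : ℕ} {ι : Type*} [Fintype ι] {e : ι → Fin p → Fin p → ℝ}
    (hp : 0 < p) (htr : ∀ k, ∑ a, e k a a = 0)
    (hpars : ∀ A : Fin p → Fin p → ℝ, (∀ a b, A a b = A b a) → ∑ a, A a a = 0 →
      ∑ k, (∑ a, ∑ b, e k a b * A a b) ^ 2 = ∑ a, ∑ b, A a b ^ 2)
    {θ : Fin p → ℝ} (hθ : ∑ a, θ a ^ 2 = 1) (τ : ℝ) :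
    ‖shift e θ (τ * p)‖ ^ 2 = 2 * ((p : ℝ) - 1) * τ ^ 2 / ((p : ℝ) + 2) := by
  have hp' : (p : ℝ) ≠ 0 := by positivity
  have hp2 : (p : ℝ) + 2 ≠ 0 := by positivity
  have h := sum_sq_sum_mul_of_trace_one hp htr hpars (A := fun a b => θ a * θ b)
    (fun a b => mul_comm _ _) (by simpa only [← sq] using hθ)
  have h1 : ∑ a, ∑ b, (θ a * θ b) ^ 2 = 1 := by
    simp only [mul_pow, ← Finset.mul_sum, hθ, mul_one]
  simp only [EuclideanSpace.norm_sq_eq, shift, Real.norm_eq_abs, sq_abs]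
  simp only [mul_pow _ (∑ a, ∑ b, _), ← Finset.mul_sum, h, h1]
  rw [mul_pow, mul_pow, Real.sq_sqrt (by positivity)]
  field_simp

theorem tendsto_charFun_map_scores {p : ℕ} (hp : 2 ≤ p)
    {U : Measure (Fin p → ℝ)} [IsProbabilityMeasure U]
    (hUsphere : U {x : Fin p → ℝ | ∑ a, x a ^ 2 = 1}ᶜ = 0)
    (hUrot : ∀ O : Matrix (Fin p) (Fin p) ℝ, O * Oᵀ = 1 →
      Measure.map (fun x => O.mulVec x) U = U)
    {θ : Fin p → ℝ} (hθ : ∑ a, θ a ^ 2 = 1) {f : ℝ → ℝ} (hf_pos : ∀ x, 0 < f x)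
    (hf_mono : Monotone f) {r : ℝ → ℝ} {a : ℝ} (hr : Tendsto r (𝓝 0) (𝓝 a))
    (hfr : ∀ v, f v = 1 + v + r v * v ^ 2)
    {κ : ℕ → ℝ} {c : ℝ} (hκ : Tendsto (fun n : ℕ => √n * κ n) atTop (𝓝 c))
    {ι : Type*} [Fintype ι] [DecidableEq ι] {e : ι → Fin p → Fin p → ℝ}
    (hsym : ∀ k a b, e k a b = e k b a) (htr : ∀ k, ∑ a, e k a a = 0)
    (horth : ∀ k l, ∑ a, ∑ b, e k a b * e l a b = if k = l then 1 else 0)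
    (t : EuclideanSpace ℝ ι) :
    Tendsto (fun n : ℕ => charFun
        ((Measure.pi fun _ : Fin n => axialMeasure U θ f (κ n)).map (scores e n)) t) atTop
      (𝓝 (charFun ((stdGaussian (EuclideanSpace ℝ ι)).map (· + shift e θ c)) t)) := by
  have hp' : (0 : ℝ) < p := by exact_mod_cast (by omega : 0 < p)
  set A : Fin p → Fin p → ℝ := fun a b => ∑ k, (√(p * (p + 2) / 2) * t k) * e k a b with hA
  have hAsym : ∀ a b, A a b = A b a := fun a b => by simp only [hA, hsym _ a b]
  have hAtr : ∑ a, A a a = 0 := by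
    rw [hA, Finset.sum_comm]
    simp [← Finset.mul_sum, htr]
  have hAsq : 2 * (∑ a, ∑ b, A a b ^ 2) / (p * (p + 2)) = ‖t‖ ^ 2 := by
    rw [hA, sum_sq_sum_smul_of_orthonormal horth, EuclideanSpace.norm_sq_eq]
    simp only [mul_pow, ← Finset.mul_sum, Real.norm_eq_abs, sq_abs]
    rw [Real.sq_sqrt (by positivity)]
    field_simp
  have hAθ : c * (2 * (∑ a, ∑ b, A a b * (θ a * θ b)) / (p * (p + 2)))
      = inner ℝ (shift e θ c) t := by
    have : ∑ a, ∑ b, A a b * (θ a * θ b)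
        = ∑ k, (√(p * (p + 2) / 2) * t k) * ∑ a, ∑ b, e k a b * (θ a * θ b) := by
      simp only [hA, Finset.sum_mul, Finset.mul_sum]
      rw [Finset.sum_comm_cycle]
      exact Finset.sum_congr rfl fun k _ => Finset.sum_congr rfl fun a _ =>
        Finset.sum_congr rfl fun b _ => by ring
    rw [this]
    simp only [PiLp.inner_apply, shift, RCLike.inner_apply, conj_trivial, Finset.mul_sum,
      Finset.sum_div]
    exact Finset.sum_congr rfl fun k _ => Finset.sum_congr rfl fun a _ =>
      Finset.sum_congr rfl fun b _ => by ring
  have h := Complex.tendsto_one_add_pow_exp_of_tendsto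
    (tendsto_nat_mul_integral_exp_quadForm hp hUsphere hUrot hθ hf_mono.measurable hr hfr hκ
      hAsym hAtr)
  rw [hAsq, hAθ, Complex.exp_add] at h
  rw [charFun_map_add_const, charFun_stdGaussian, ← Complex.ofReal_pow]
  refine h.congr fun n => ?_
  have := isFiniteMeasure_axialMeasure hp hUsphere hθ hf_pos hf_mono (κ n)
  rw [charFun_map_scores, integral_axialMeasure hp hf_pos hf_mono.measurable, add_sub_cancel]

/-- Theorem 4.2: non-null limiting distribution of the Bingham statistic.
Under `P^{(n)}_{θ,κ_n,f}` with `κ_n = τ_n p/√n`, `τ_n → τ`, the Bingham statistic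
`Q^{(n)}(x) = (np(p+2)/2)(tr[S_n(x)²] - 1/p)` converges in distribution to the noncentral
chi-square with `d_p = p(p+1)/2 - 1` degrees of freedom and noncentrality
`2(p-1)τ²/(p+2)`, realized as the law of `‖G + μ‖²` for a standard Gaussian `G` on
`ℝ^{d_p}` and any `μ` with `‖μ‖² = 2(p-1)τ²/(p+2)`. -/
theorem Bingham_statistic_noncentral_chi_square_limit
    (p : ℕ) (hp : 2 ≤ p)
    (U : Measure (Fin p → ℝ)) [IsProbabilityMeasure U]
    (hUsphere : U {x : Fin p → ℝ | ∑ a, x a ^ 2 = 1}ᶜ = 0)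
    (hUrot : ∀ O : Matrix (Fin p) (Fin p) ℝ, O * Oᵀ = 1 →
      Measure.map (fun x => O.mulVec x) U = U)
    (θ : Fin p → ℝ) (hθ : ∑ a, θ a ^ 2 = 1)
    (f : ℝ → ℝ) (hf_pos : ∀ x, 0 < f x) (hf_mono : Monotone f)
    (hf_diff : ∀ᶠ x in 𝓝 (0:ℝ), DifferentiableAt ℝ f x)
    (hf_diff2 : DifferentiableAt ℝ (deriv f) 0)
    (hf0 : f 0 = 1) (hf'0 : deriv f 0 = 1)
    (τseq : ℕ → ℝ) (τ : ℝ) (hτ : Tendsto τseq atTop (𝓝 τ))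
    (κ : ℕ → ℝ) (hκ : ∀ n, κ n = τseq n * p / Real.sqrt n)
    (Q : ∀ n : ℕ, (Fin n → (Fin p → ℝ)) → ℝ)
    (hQ : ∀ n x, Q n x =
      ((n:ℝ) * p * ((p:ℝ) + 2) / 2) * (Matrix.trace (Sn p n x * Sn p n x) - 1 / (p:ℝ))) :
    ∀ μ : Fin (p * (p + 1) / 2 - 1) → ℝ,
      (∑ i, μ i ^ 2) = 2 * ((p:ℝ) - 1) * τ ^ 2 / ((p:ℝ) + 2) →
      ∀ g : BoundedContinuousFunction ℝ ℝ,
        Tendsto (fun n => ∫ x, g (Q n x)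
            ∂(Measure.pi (fun _ : Fin n =>
              U.withDensity (fun y => ENNReal.ofReal
                ((cKF p (κ n) f / c0 p) * f (κ n * (∑ a, y a * θ a) ^ 2)))))) atTop
          (𝓝 (∫ z, g (∑ i, (z i + μ i) ^ 2)
            ∂(Measure.pi (fun _ : Fin (p * (p + 1) / 2 - 1) => gaussianReal 0 1)))) := by

  intro μ hμ g
  have hp0 : 0 < p := by omega
  obtain ⟨r, a, hr, hfr⟩ := exists_quadratic_remainder hf_diff hf_diff2 hf0 hf'0
  obtain ⟨e, hsym, htr, horth, hpars⟩ := exists_orthonormal_symmetric_traceless p hp0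
  generalize p * (p + 1) / 2 - 1 = d at μ e hsym htr horth hpars hμ ⊢
  have hκlim : Tendsto (fun n : ℕ => √n * κ n) atTop (𝓝 (τ * p)) := by
    refine (hτ.mul_const (p : ℝ)).congr' ?_
    filter_upwards [eventually_gt_atTop 0] with n hn
    have : √(n : ℝ) ≠ 0 := by positivity
    rw [hκ]
    field_simp
  have hfin := fun n =>
    isFiniteMeasure_axialMeasure hp hUsphere hθ hf_pos hf_mono (κ n)
  have hnorm : ‖shift e θ (τ * p)‖ = ‖(WithLp.toLp 2 μ : EuclideanSpace ℝ _)‖ := by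
    rw [← sq_eq_sq₀ (norm_nonneg _) (norm_nonneg _), norm_sq_shift hp0 htr hpars hθ, ← hμ,
      EuclideanSpace.norm_sq_eq]
    simp
  have : IsProbabilityMeasure ((stdGaussian (EuclideanSpace ℝ (Fin d))).map
      (· + shift e θ (τ * p))) := Measure.isProbabilityMeasure_map (by fun_prop)
  have hchar := tendsto_charFun_map_scores hp hUsphere hUrot hθ hf_pos hf_mono hr hfr hκlim
    hsym htr horth
  have h := tendsto_integral_of_tendsto_charFun
    (fun n => (Measure.pi fun _ : Fin n => axialMeasure U θ f (κ n)).map (scores e n))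
    ((stdGaussian (EuclideanSpace ℝ (Fin d))).map (· + shift e θ (τ * p))) hchar
    (g.compContinuous ⟨fun z => ‖z‖ ^ 2, by fun_prop⟩)
  simp only [BoundedContinuousFunction.compContinuous_apply, ContinuousMap.coe_mk] at h
  rw [integral_stdGaussian_add_norm_sq hnorm] at h
  refine h.congr' ?_
  filter_upwards [eventually_gt_atTop 0] with n hn
  rw [integral_map (continuous_scores e n).measurable.aemeasurable (by fun_prop)]
  have hsph : ∀ᵐ y ∂(axialMeasure U θ f (κ n)), ∑ a, y a ^ 2 = 1 :=
    (withDensity_absolutelyContinuous _ _).ae_le hUsphere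
  have hall : ∀ᵐ x ∂(Measure.pi fun _ : Fin n => axialMeasure U θ f (κ n)),
      ∀ i, ∑ a, x i a ^ 2 = 1 :=
    eventually_all.2 fun i => (Measure.tendsto_eval_ae_ae
      (μ := fun _ : Fin n => axialMeasure U θ f (κ n)) (i := i)).eventually hsph
  refine integral_congr_ae ?_
  filter_upwards [hall] with x hx
  rw [hQ, norm_sq_scores_eq hp0 htr hpars hn hx]

end
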